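/- arXiv:2510.14582 — 2 statements merged into one kernel-verified Lean document; each statement's English description precedes it below -/
import Mathlib

section
/- Let G be the CPDAG of the Markov equivalence class of a DAG, and let X and V be distinct nodes joined by an undirected edge in G (i.e., V ∈ Sib_G(X)). Then Pa_G(X) ⊆ Pa_G(V): every node with a directed edge into X in G also has a directed edge into V in G. -/
/-- A directed acyclic graph on node set `V`: a directed edge relation with no
directed cycles (no edge `a → b` together with a directed path from `b` back to `a`). -/
structure Dag (V : Type*) where
  edge : V → V → Prop
  acyclic : ∀ a b : V, edge a b → ¬ Relation.ReflTransGen edge b a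

variable {V : Type*}

namespace Dag

/-- `a` is an ancestor of `b` (equivalently, `b` is a descendant of `a`):
there is a directed path from `a` to `b`; every node is its own ancestor. -/
def Anc (D : Dag V) (a b : V) : Prop := Relation.ReflTransGen D.edge a b

/-- `a` and `b` are adjacent (joined by an edge in either direction). -/
def Adj (D : Dag V) (a b : V) : Prop := D.edge a b ∨ D.edge b a

/-- The parents of `x` in the DAG `D`. -/
def Pa (D : Dag V) (x : V) : Set V := {a | D.edge a x}

/-- The Markov blanket of `x`: parents, children, and parents of children of `x`
(excluding `x` itself). -/
def MB (D : Dag V) (x : V) : Set V :=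
  {v | v ≠ x ∧ (D.edge v x ∨ D.edge x v ∨ ∃ c : V, D.edge x c ∧ D.edge v c)}

end Dag

/-- A path between `x` and `y` with respect to an adjacency relation `A`:
a sequence of distinct nodes, starting at `x` and ending at `y`, in which
consecutive nodes are adjacent. `n` is the number of edges of the path. -/
structure GPath (A : V → V → Prop) (x y : V) where
  n : ℕ
  f : Fin (n + 1) → V
  inj : Function.Injective f
  first : f ⟨0, by omega⟩ = x
  last : f ⟨n, by omega⟩ = y
  adj : ∀ i : Fin n, A (f i.castSucc) (f i.succ)

namespace GPath

/-- The non-endpoint node at position `i` of the path `p` is a collider with respect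
to the directed edge relation `E`: both incident edges of the path point into it. -/
def ColliderAt {A : V → V → Prop} {x y : V} (p : GPath A x y)
    (E : V → V → Prop) (i : ℕ) : Prop :=
  ∃ (_ : 0 < i) (_ : i < p.n),
    E (p.f ⟨i - 1, by omega⟩) (p.f ⟨i, by omega⟩) ∧
    E (p.f ⟨i + 1, by omega⟩) (p.f ⟨i, by omega⟩)

/-- The path `p` is blocked by the node set `S` in the DAG `D`: it contains a
non-collider that lies in `S`, or a collider such that neither the collider nor any
of its descendants lies in `S`. -/
def Blocked {A : V → V → Prop} {x y : V} (p : GPath A x y)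
    (D : Dag V) (S : Set V) : Prop :=
  ∃ (i : ℕ) (_ : 0 < i) (_ : i < p.n),
    (¬ p.ColliderAt D.edge i ∧ p.f ⟨i, by omega⟩ ∈ S) ∨
    (p.ColliderAt D.edge i ∧ ∀ d : V, D.Anc (p.f ⟨i, by omega⟩) d → d ∉ S)

end GPath

namespace Dag

/-- `x` and `y` are d-separated by `S` in the DAG `D`: every path between `x` and `y`
is blocked by `S`. -/
def dSep (D : Dag V) (x y : V) (S : Set V) : Prop :=
  ∀ p : GPath D.Adj x y, p.Blocked D S

/-- Two DAGs on the same node set are Markov equivalent if they have exactly the same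
d-separation relations. -/
def MEquiv (D D' : Dag V) : Prop :=
  ∀ (x y : V) (S : Set V), D.dSep x y S ↔ D'.dSep x y S

/-- The edge between `a` and `b` is directed `a → b` in the CPDAG of the Markov
equivalence class of `D`: the edge `a → b` holds in every DAG Markov equivalent to `D`. -/
def CpDir (D : Dag V) (a b : V) : Prop :=
  ∀ D' : Dag V, D.MEquiv D' → D'.edge a b

/-- The edge between `a` and `b` is undirected (`a − b`) in the CPDAG: `a` and `b` are
adjacent (the CPDAG has the same adjacencies as the DAGs of the MEC) but the edge is not
directed either way in the CPDAG. -/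
def CpUndir (D : Dag V) (a b : V) : Prop :=
  D.Adj a b ∧ ¬ D.CpDir a b ∧ ¬ D.CpDir b a

/-- `Pa_G(a)`: the nodes with a directed edge into `a` in the CPDAG. -/
def CpPa (D : Dag V) (a : V) : Set V := {p | D.CpDir p a}

/-- `Ch_G(a)`: the nodes `b` with the edge directed `a → b` in the CPDAG. -/
def CpCh (D : Dag V) (a : V) : Set V := {c | D.CpDir a c}

/-- `Sib_G(a)`: the nodes joined to `a` by an undirected edge in the CPDAG. -/
def CpSib (D : Dag V) (a : V) : Set V := {s | D.CpUndir a s}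

end Dag

namespace GPath

/-- `p` is a possibly directed path in the CPDAG: no edge on it is directed
backwards (as `V_i ← V_{i+1}`) in the CPDAG. -/
def CpPossiblyDirected {D : Dag V} {x y : V} (p : GPath D.Adj x y) : Prop :=
  ∀ i : Fin p.n, ¬ D.CpDir (p.f i.succ) (p.f i.castSucc)

/-- `p` is a (fully) directed path in the CPDAG: every edge on it is directed
forwards in the CPDAG. -/
def CpDirected {D : Dag V} {x y : V} (p : GPath D.Adj x y) : Prop :=
  ∀ i : Fin p.n, D.CpDir (p.f i.castSucc) (p.f i.succ)

/-- `p` is a directed path from `x` to `y` in the DAG `D` itself. -/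
def DirectedIn {D : Dag V} {x y : V} (p : GPath D.Adj x y) : Prop :=
  ∀ i : Fin p.n, D.edge (p.f i.castSucc) (p.f i.succ)

/-- `p` is unshielded: for every three consecutive nodes on it, the first and the
third are non-adjacent. -/
def Unshielded {D : Dag V} {x y : V} (p : GPath D.Adj x y) : Prop :=
  ∀ (i : ℕ) (_ : i + 2 ≤ p.n), ¬ D.Adj (p.f ⟨i, by omega⟩) (p.f ⟨i + 2, by omega⟩)

end GPath

namespace Dag

/-- `x` is a possible ancestor of `y` in the CPDAG: there is a possibly directed path
from `x` to `y`. -/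
def PossAn (D : Dag V) (x y : V) : Prop :=
  ∃ p : GPath D.Adj x y, p.CpPossiblyDirected

/-- `x` is an explicit ancestor of `y` in the CPDAG: there is a fully directed path
from `x` to `y` in the CPDAG. -/
def ExplAn (D : Dag V) (x y : V) : Prop :=
  ∃ p : GPath D.Adj x y, p.CpDirected

/-- The CPDAG is amenable relative to `(x, y)`: every possibly directed path from
`x` to `y` starts with a directed edge out of `x`. -/
def Amenable (D : Dag V) (x y : V) : Prop :=
  ∀ p : GPath D.Adj x y, p.CpPossiblyDirected →
    ∀ _ : 0 < p.n, D.CpDir (p.f ⟨0, by omega⟩) (p.f ⟨1, by omega⟩)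

/-- `S` is a valid adjustment set for `(x, y)` in the DAG `D`:
(i) no element of `S` is a descendant of any node `w ≠ x` lying on a directed path
from `x` to `y`, and (ii) every path between `x` and `y` that is not a directed path
from `x` to `y` is blocked by `S`. -/
def ValidAdjustment (D : Dag V) (x y : V) (S : Set V) : Prop :=
  (∀ s ∈ S, ∀ w : V, w ≠ x → D.Anc x w → D.Anc w y → ¬ D.Anc w s) ∧
  (∀ p : GPath D.Adj x y, ¬ p.DirectedIn → p.Blocked D S)

/-- `Cn_D(x, y)`: the nodes `w ≠ x` lying on some directed path from `x` to `y` in `D`. -/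
def Cn (D : Dag V) (x y : V) : Set V := {w | w ≠ x ∧ D.Anc x w ∧ D.Anc w y}

end Dag

namespace Dag

theorem irr (D : Dag V) (a : V) : ¬ D.edge a a := fun h => D.acyclic a a h .refl

theorem asym (D : Dag V) {a b : V} (h : D.edge a b) : ¬ D.edge b a :=
  fun h' => D.acyclic a b h (.single h')

theorem no3 (D : Dag V) {a b c : V} (h : D.edge a b) (h' : D.edge b c) : ¬ D.edge c a :=
  fun h'' => D.acyclic a b h (.tail (.single h') h'')

theorem Adj.symm {D : Dag V} {a b : V} (h : D.Adj a b) : D.Adj b a := Or.symm h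

theorem Adj.ne {D : Dag V} {a b : V} (h : D.Adj a b) : a ≠ b := by
  rintro rfl
  exact D.irr a (h.elim id id)

theorem tri (D : Dag V) {a b c : V} (h : D.edge a b) (h1 : D.edge b c) (h2 : D.Adj a c) :
    D.edge a c := h2.resolve_right (D.no3 h h1)

/-- An unshielded collider. -/
def IsV (D : Dag V) (a b c : V) : Prop := D.edge a b ∧ D.edge c b ∧ ¬ D.Adj a c ∧ a ≠ c

/-- Same skeleton and same unshielded colliders. -/
def Same (D D' : Dag V) : Prop :=
  (∀ a b, D.Adj a b ↔ D'.Adj a b) ∧ ∀ a b c, D.IsV a b c ↔ D'.IsV a b c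

/-- The closure of the unshielded colliders under the orientation rules of Meek. -/
inductive M (D : Dag V) : V → V → Prop
  | vs {a b c : V} (h : D.IsV a b c) : M D a b
  | r1 {d a b : V} (h : M D d a) (e : D.edge a b) (n : ¬ D.Adj d b) (ne : d ≠ b) : M D a b
  | r2 {a d b : V} (h : M D a d) (h' : M D d b) (e : D.edge a b) : M D a b
  | r3 {a b c d : V} (h : M D c b) (h' : M D d b) (n : ¬ D.Adj c d) (ne : c ≠ d)
      (e : D.edge a b) (ac : D.Adj a c) (ad : D.Adj a d)
      (nv : ¬ (D.edge c a ∧ D.edge d a)) : M D a b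

theorem M.edge {D : Dag V} {a b : V} (h : D.M a b) : D.edge a b := by
  cases h with
  | vs h => exact h.1
  | r1 h e n ne => exact e
  | r2 h h' e => exact e
  | r3 h h' n ne e => exact e

theorem M.sound {D D' : Dag V} (hs : D.Same D') {a b : V} (h : D.M a b) : D'.edge a b := by
  induction h with
  | vs h => exact ((hs.2 _ _ _).1 h).1
  | @r1 d a b h e n ne ih =>
    refine ((hs.1 a b).1 (.inl e)).resolve_right fun hba => ?_
    have := (hs.2 d a b).2 ⟨ih, hba, fun h => n ((hs.1 _ _).2 h), ne⟩
    exact D.asym e this.2.1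
  | @r2 a d b h h' e ih ih' => exact D'.tri ih ih' ((hs.1 _ _).1 (.inl e))
  | @r3 a b c d h h' n ne e ac ad nv ih ih' =>
    refine ((hs.1 a b).1 (.inl e)).resolve_right fun hba => nv ?_
    have h1 := D'.tri ih hba ((hs.1 _ _).1 ac.symm)
    have h2 := D'.tri ih' hba ((hs.1 _ _).1 ad.symm)
    have := (hs.2 c a d).2 ⟨h1, h2, fun h => n ((hs.1 _ _).2 h), ne⟩
    exact ⟨this.1, this.2.1⟩

/-- The undirected part. -/
def H (D : Dag V) (a b : V) : Prop := D.Adj a b ∧ ¬ D.M a b ∧ ¬ D.M b a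

theorem H.symm {D : Dag V} {a b : V} (h : D.H a b) : D.H b a := ⟨h.1.symm, h.2.2, h.2.1⟩

theorem M.adjH {D : Dag V} {a b c : V} (h : D.M a b) (hc : D.H b c) : D.Adj a c := by
  have ne : a ≠ c := by rintro rfl; exact hc.2.2 h
  by_contra n
  rcases hc.1 with e | e
  · exact hc.2.1 (.r1 h e n ne)
  · exact hc.2.2 (.vs ⟨e, h.edge, fun h => n h.symm, ne.symm⟩)

theorem M.absorb {D : Dag V} {a b : V} (h : D.M a b) : ∀ {c : V}, D.H b c → D.M a c := by
  have key : ∀ {a b c : V}, D.M a b → D.H b c → ¬ D.M a c → D.H a c := by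
    intro a b c h hc n
    refine ⟨h.adjH hc, n, fun hca => hc.2.2 ?_⟩
    exact .r2 hca h (D.tri hca.edge h.edge hc.1.symm)
  induction h with
  | @vs a b d h =>
    intro c hc
    by_contra n
    have hab : D.M a b := .vs h
    have hdb : D.M d b := .vs ⟨h.2.1, h.1, fun h' => h.2.2.1 h'.symm, h.2.2.2.symm⟩
    have hac := hab.adjH hc
    have hdc := hdb.adjH hc
    have nv : ¬ (D.edge a c ∧ D.edge d c) := fun h' => n (.vs ⟨h'.1, h'.2, h.2.2⟩)
    rcases hc.1 with e | e
    · exact nv ⟨D.tri h.1 e hac, D.tri h.2.1 e hdc⟩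
    · exact hc.2.2 (.r3 hab hdb h.2.2.1 h.2.2.2 e hac.symm hdc.symm nv)
  | @r1 d a b h e n ne ih =>
    intro c hc
    by_contra n'
    have hac := key (.r1 h e n ne) hc n'
    exact n ((ih hac).adjH hc.symm)
  | @r2 a d b h h' e ih ih' =>
    intro c hc
    have hdc := ih' hc
    exact .r2 h hdc (D.tri h.edge hdc.edge ((M.r2 h h' e).adjH hc))
  | @r3 a b d1 d2 h h' n ne e ac ad nv ih ih' =>
    intro c hc
    have h1 := ih hc
    have h2 := ih' hc
    rcases (M.r3 h h' n ne e ac ad nv).adjH hc with e' | e'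
    · exact .r3 h1 h2 n ne e' ac ad nv
    · exact absurd ⟨D.tri h1.edge e' ac.symm, D.tri h2.edge e' ad.symm⟩ nv

theorem H.moral {D : Dag V} {a b c : V} (ha : D.H a b) (hc : D.H c b) (ea : D.edge a b)
    (ec : D.edge c b) (ne : a ≠ c) : D.H a c := by
  refine ⟨?_, fun h => ?_, fun h => ?_⟩
  · by_contra n
    exact ha.2.1 (.vs ⟨ea, ec, n, ne⟩)
  · exact ha.2.1 (h.absorb hc)
  · exact hc.2.1 (h.absorb ha)

end Dag

/-- `s` is simplicial in the subgraph of `A` induced on `T`. -/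
def Simpl (A : V → V → Prop) (T : Finset V) (s : V) : Prop :=
  s ∈ T ∧ ∀ a ∈ T, ∀ b ∈ T, A s a → A s b → a ≠ b → A a b

theorem two_simpl (A : V → V → Prop) (hs : ∀ a b, A a b → A b a)
    (hA : ∀ T : Finset V, T.Nonempty → ∃ s, Simpl A T s) (n : ℕ) :
    ∀ T : Finset V, T.card = n → (∀ a ∈ T, ∀ b ∈ T, a ≠ b → A a b) ∨
      ∃ x y, Simpl A T x ∧ Simpl A T y ∧ x ≠ y ∧ ¬ A x y := by
  classical
  induction n with
  | zero =>
    intro T hT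
    left
    simp [Finset.card_eq_zero.1 hT]
  | succ n ih =>
    intro T hT
    obtain ⟨v, hv⟩ := hA T (Finset.card_pos.1 (by omega))
    have hc : (T.erase v).card = n := by rw [Finset.card_erase_of_mem hv.1]; omega
    have up : ∀ x, Simpl A (T.erase v) x → ¬ A x v → Simpl A T x := by
      intro x hx hn
      refine ⟨Finset.mem_of_mem_erase hx.1, fun a ha b hb h1 h2 ne => ?_⟩
      have ha' : a ≠ v := by rintro rfl; exact hn h1
      have hb' : b ≠ v := by rintro rfl; exact hn h2
      exact hx.2 a (Finset.mem_erase.2 ⟨ha', ha⟩) b (Finset.mem_erase.2 ⟨hb', hb⟩) h1 h2 ne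
    rcases ih _ hc with hk | ⟨x, y, hx, hy, ne, hn⟩
    · by_cases hall : ∀ a ∈ T, a ≠ v → A a v
      · left
        intro a ha b hb ne
        by_cases h1 : a = v
        · subst h1; exact hs _ _ (hall b hb ne.symm)
        · by_cases h2 : b = v
          · subst h2; exact hall a ha ne
          · exact hk a (Finset.mem_erase.2 ⟨h1, ha⟩) b (Finset.mem_erase.2 ⟨h2, hb⟩) ne
      · push Not at hall
        obtain ⟨x, hx, ne, hn⟩ := hall
        right
        refine ⟨x, v, up x ⟨Finset.mem_erase.2 ⟨ne, hx⟩, ?_⟩ hn, hv, ne, hn⟩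
        intro a ha b hb _ _ ne
        exact hk a ha b hb ne
    · right
      by_cases h1 : A x v
      · have h2 : ¬ A y v := fun h2 =>
          hn (hv.2 x (Finset.mem_of_mem_erase hx.1) y (Finset.mem_of_mem_erase hy.1)
            (hs _ _ h1) (hs _ _ h2) ne)
        exact ⟨y, v, up y hy h2, hv, Finset.ne_of_mem_erase hy.1, h2⟩
      · exact ⟨x, v, up x hx h1, hv, Finset.ne_of_mem_erase hx.1, h1⟩

theorem exists_rank (A : V → V → Prop) (hs : ∀ a b, A a b → A b a)
    (hA : ∀ T : Finset V, T.Nonempty → ∃ s, Simpl A T s) (v : V) (n : ℕ) :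
    ∀ T : Finset V, T.card = n → v ∈ T → ∃ r : V → ℕ,
      (∀ a ∈ T, ∀ b ∈ T, r a = r b → a = b) ∧ (∀ a ∈ T, a ≠ v → r v < r a) ∧
      ∀ a ∈ T, ∀ b ∈ T, ∀ c ∈ T, A a b → A c b → r a < r b → r c < r b → a ≠ c → A a c := by
  classical
  induction n with
  | zero =>
    intro T hT hv
    simp [Finset.card_eq_zero.1 hT] at hv
  | succ n ih =>
    intro T hT hv
    by_cases hone : ∀ a ∈ T, a = v
    · refine ⟨fun _ => 0, fun a ha b hb _ => by rw [hone a ha, hone b hb],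
        fun a ha h => absurd (hone a ha) h, ?_⟩
      intro a _ b _ c _ _ _ h
      exact absurd h (lt_irrefl _)
    · obtain ⟨x, hx, hxv⟩ : ∃ x, Simpl A T x ∧ x ≠ v := by
        rcases two_simpl A hs hA _ T rfl with hk | ⟨x, y, hx, hy, ne, -⟩
        · push Not at hone
          obtain ⟨x, hx, ne⟩ := hone
          exact ⟨x, ⟨hx, fun a ha b hb _ _ ne => hk a ha b hb ne⟩, ne⟩
        · by_cases h : x = v
          · exact ⟨y, hy, fun h' => ne (h.trans h'.symm)⟩
          · exact ⟨x, hx, h⟩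
      have hc : (T.erase x).card = n := by rw [Finset.card_erase_of_mem hx.1]; omega
      obtain ⟨r, r1, r2, r3⟩ := ih _ hc (Finset.mem_erase.2 ⟨hxv.symm, hv⟩)
      have hm : ∀ a ∈ T, r a < T.sup r + 1 := fun a ha => Nat.lt_succ_of_le (Finset.le_sup ha)
      have mem : ∀ a ∈ T, a ≠ x → a ∈ T.erase x := fun a ha h => Finset.mem_erase.2 ⟨h, ha⟩
      refine ⟨fun a => if a = x then T.sup r + 1 else r a, ?_, ?_, ?_⟩
      · intro a ha b hb h
        have := hm a ha
        have := hm b hb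
        have := r1 a
        dsimp only at h
        split_ifs at h with h1 h2 h2
        · rw [h1, h2]
        · omega
        · omega
        · exact r1 a (mem a ha h1) b (mem b hb h2) h
      · intro a ha h
        have := hm v hv
        dsimp only
        rw [if_neg hxv.symm]
        split_ifs with h1
        · exact this
        · exact r2 a (mem a ha h1) h
      · intro a ha b hb c hcT hab hcb h1 h2 ne
        have := hm a ha
        have := hm b hb
        have := hm c hcT
        dsimp only at h1 h2
        by_cases hbx : b = x
        · subst hbx
          exact hx.2 a ha c hcT (hs _ _ hab) (hs _ _ hcb) ne
        · rw [if_neg hbx] at h1 h2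
          have hax : a ≠ x := by
            intro h; rw [if_pos h] at h1; omega
          have hcx : c ≠ x := by
            intro h; rw [if_pos h] at h2; omega
          rw [if_neg hax] at h1
          rw [if_neg hcx] at h2
          exact r3 a (mem a ha hax) b (mem b hb hbx) c (mem c hcT hcx) hab hcb h1 h2 ne

namespace Dag

theorem transGen_irr (D : Dag V) (a : V) : ¬ Relation.TransGen D.edge a a := by
  intro h
  obtain ⟨b, h1, h2⟩ := Relation.TransGen.head'_iff.1 h
  exact D.acyclic a b h1 h2

/-- A linear extension as a strict order in which induction is possible. -/
theorem wf [Finite V] (D : Dag V) : WellFounded (Relation.TransGen D.edge) := by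
  have : IsTrans V (Relation.TransGen D.edge) := ⟨fun _ _ _ h h' => h.trans h'⟩
  have : Std.Irrefl (Relation.TransGen D.edge) := ⟨D.transGen_irr⟩
  exact Finite.wellFounded_of_trans_of_irrefl _

theorem wf' [Finite V] (D : Dag V) : WellFounded (Function.swap (Relation.TransGen D.edge)) := by
  have : IsTrans V (Function.swap (Relation.TransGen D.edge)) := ⟨fun _ _ _ h h' => h'.trans h⟩
  have : Std.Irrefl (Function.swap (Relation.TransGen D.edge)) := ⟨D.transGen_irr⟩
  exact Finite.wellFounded_of_trans_of_irrefl _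

theorem H_simpl [Finite V] (D : Dag V) (T : Finset V) (hT : T.Nonempty) :
    ∃ s, Simpl D.H T s := by
  obtain ⟨s, hs, hmax⟩ := D.wf'.has_min (T : Set V) hT
  refine ⟨s, hs, fun a ha b hb h1 h2 ne => ?_⟩
  have ea : D.edge a s := h1.1.resolve_left fun e => hmax a ha (.single e)
  have eb : D.edge b s := h2.1.resolve_left fun e => hmax b hb (.single e)
  exact h1.symm.moral h2.symm ea eb ne

theorem exists_flip [Fintype V] (D : Dag V) (v : V) :
    ∃ D' : Dag V, D.Same D' ∧ ∀ u, D.H u v → ¬ D'.edge u v := by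
  obtain ⟨r, r1, r2, r3⟩ := exists_rank D.H (fun _ _ h => h.symm) D.H_simpl v _ Finset.univ rfl
    (Finset.mem_univ v)
  simp only [Finset.mem_univ, true_imp_iff] at r1 r2 r3
  let E : V → V → Prop := fun a b => D.M a b ∨ (D.H a b ∧ r a < r b)
  have abs1 : ∀ {z b c}, Relation.TransGen D.M z b → D.H b c → Relation.TransGen D.M z c := by
    intro z b c h hc
    cases h with
    | single h => exact .single (h.absorb hc)
    | tail h1 h => exact .tail h1 (h.absorb hc)
  have abs2 : ∀ {z b c}, Relation.TransGen D.M z b → Relation.ReflTransGen D.H b c →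
      Relation.TransGen D.M z c := by
    intro z b c h hc
    induction hc with
    | refl => exact h
    | tail _ h' ih => exact abs1 ih h'
  have form : ∀ {a b}, Relation.TransGen E a b →
      (Relation.ReflTransGen D.H a b ∧ r a < r b) ∨
      ∃ z, Relation.ReflTransGen D.H a z ∧ Relation.TransGen D.M z b := by
    intro a b h
    induction h with
    | single h =>
      rcases h with h | h
      · exact .inr ⟨_, .refl, .single h⟩
      · exact .inl ⟨.single h.1, h.2⟩
    | tail _ h ih =>
      rcases h with h | h <;> rcases ih with ih | ⟨z, h1, h2⟩
      · exact .inr ⟨_, ih.1, .single h⟩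
      · exact .inr ⟨z, h1, h2.tail h⟩
      · exact .inl ⟨ih.1.tail h.1, ih.2.trans h.2⟩
      · exact .inr ⟨z, h1, abs1 h2 h.1⟩
  let D' : Dag V := ⟨E, fun a b h h' => by
    rcases form (Relation.TransGen.head' h h') with h | ⟨z, h1, h2⟩
    · exact lt_irrefl _ h.2
    · exact D.transGen_irr z (Relation.TransGen.mono (fun _ _ h => M.edge h) _ _ (abs2 h2 h1))⟩
  have hadj : ∀ a b, D.Adj a b ↔ D'.Adj a b := by
    intro a b
    constructor
    · intro h
      by_cases h1 : D.M a b
      · exact .inl (.inl h1)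
      by_cases h2 : D.M b a
      · exact .inr (.inl h2)
      have hH : D.H a b := ⟨h, h1, h2⟩
      rcases lt_trichotomy (r a) (r b) with h3 | h3 | h3
      · exact .inl (.inr ⟨hH, h3⟩)
      · exact absurd (r1 _ _ h3) h.ne
      · exact .inr (.inr ⟨hH.symm, h3⟩)
    · rintro ((h | h) | (h | h))
      · exact .inl h.edge
      · exact h.1.1
      · exact .inr h.edge
      · exact h.1.1.symm
  refine ⟨D', ⟨hadj, fun a b c => ⟨fun h => ?_, fun h => ?_⟩⟩, ?_⟩
  · exact ⟨.inl (.vs h), .inl (.vs ⟨h.2.1, h.1, fun h' => h.2.2.1 h'.symm, h.2.2.2.symm⟩),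
      fun h' => h.2.2.1 ((hadj _ _).2 h'), h.2.2.2⟩
  · obtain ⟨h1, h2, h3, h4⟩ := h
    have h3' : ¬ D.Adj a c := fun h => h3 ((hadj _ _).1 h)
    rcases h1 with h1 | h1 <;> rcases h2 with h2 | h2
    · exact ⟨h1.edge, h2.edge, h3', h4⟩
    · exact absurd (h1.adjH h2.1.symm) h3'
    · exact absurd (h2.adjH h1.1.symm).symm h3'
    · exact absurd (r3 a b c h1.1 h2.1 h1.2 h2.2 h4).1 h3'
  · rintro u hu (h | h)
    · exact hu.2.1 h
    · have := r2 u hu.1.ne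
      omega

end Dag

namespace Dag

/-- `v` has a descendant in `C`. -/
def AnS (D : Dag V) (C : Set V) (v : V) : Prop := ∃ d, D.Anc v d ∧ d ∈ C

/-- Reachability from `s` by active walks; the Boolean tells whether the last edge of the walk
points into the current node. -/
inductive Reach (D : Dag V) (N C : Set V) (s : V) : V → Bool → Prop
  | start : Reach D N C s s false
  | fwd {v w : V} {d : Bool} (h : Reach D N C s v d) (n : v ∉ N) (e : D.edge v w) :
      Reach D N C s w true
  | bwdOut {v w : V} (h : Reach D N C s v false) (n : v ∉ N) (e : D.edge w v) :
      Reach D N C s w false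
  | bwdIn {v w : V} (h : Reach D N C s v true) (n : D.AnS C v) (e : D.edge w v) :
      Reach D N C s w false

/-- The triple `a, b, c` is open at `b`. -/
def Act (D : Dag V) (N C : Set V) (a b c : V) : Prop :=
  (D.edge a b ∧ D.edge c b → D.AnS C b) ∧ (¬ (D.edge a b ∧ D.edge c b) → b ∉ N)

/-- Active walks. -/
def IsWalk (D : Dag V) (N C : Set V) (s t : V) (n : ℕ) (g : ℕ → V) : Prop :=
  g 0 = s ∧ g n = t ∧ (∀ i, i < n → D.Adj (g i) (g (i + 1))) ∧
  ∀ i, i + 2 ≤ n → D.Act N C (g i) (g (i + 1)) (g (i + 2))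

theorem IsWalk.extend {D : Dag V} {N C : Set V} {s t w : V} {n : ℕ} {g : ℕ → V}
    (h : D.IsWalk N C s t n g) (ha : D.Adj t w)
    (hact : ∀ m, n = m + 1 → D.Act N C (g m) t w) :
    ∃ g', D.IsWalk N C s w (n + 1) g' ∧ g' n = t := by
  obtain ⟨h1, h2, h3, h4⟩ := h
  have le : ∀ k, k ≤ n → (fun k => if k ≤ n then g k else w) k = g k := fun k hk => if_pos hk
  have gt : (fun k => if k ≤ n then g k else w) (n + 1) = w := if_neg (by omega)
  refine ⟨fun k => if k ≤ n then g k else w, ⟨?_, gt, ?_, ?_⟩, ?_⟩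
  · rw [le 0 (by omega), h1]
  · intro i hi
    rcases Nat.lt_or_ge i n with h | h
    · rw [le i (by omega), le (i + 1) (by omega)]
      exact h3 i h
    · obtain rfl : i = n := by omega
      rw [le i le_rfl, gt, h2]
      exact ha
  · intro i hi
    rcases Nat.lt_or_ge (i + 1) n with h | h
    · rw [le i (by omega), le (i + 1) (by omega), le (i + 2) (by omega)]
      exact h4 i h
    · obtain rfl : i + 1 = n := by omega
      rw [le i (by omega), le (i + 1) (by omega), gt, h2]
      exact hact i rfl
  · rw [le n le_rfl, h2]

theorem Reach.walk {D : Dag V} {N C : Set V} {s t : V} {d : Bool} (h : D.Reach N C s t d) :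
    ∃ n g, D.IsWalk N C s t n g ∧ (n = 0 → d = false) ∧
      ∀ m, n = m + 1 → (d = true → D.edge (g m) t) ∧ (d = false → D.edge t (g m)) := by
  induction h with
  | start =>
    refine ⟨0, fun _ => s, ⟨rfl, rfl, ?_, ?_⟩, fun _ => rfl, ?_⟩
    · intro i hi; omega
    · intro i hi; omega
    · intro i hi; omega
  | @fwd v w d h n e ih =>
    obtain ⟨k, g, hw, h0, hd⟩ := ih
    obtain ⟨g', hw', hk⟩ := hw.extend (w := w) (.inl e) (fun m _ =>
      ⟨fun h' => absurd h'.2 (D.asym e), fun _ => n⟩)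
    refine ⟨k + 1, g', hw', by omega, ?_⟩
    rintro m hm
    obtain rfl : k = m := by omega
    rw [hk]
    simp [e]
  | @bwdOut v w h n e ih =>
    obtain ⟨k, g, hw, h0, hd⟩ := ih
    obtain ⟨g', hw', hk⟩ := hw.extend (w := w) (.inr e) (fun m _ =>
      ⟨fun h' => absurd h'.1 (D.asym ((hd m ‹_›).2 rfl)), fun _ => n⟩)
    refine ⟨k + 1, g', hw', by omega, ?_⟩
    rintro m hm
    obtain rfl : k = m := by omega
    rw [hk]
    simp [e]
  | @bwdIn v w h n e ih =>
    obtain ⟨k, g, hw, h0, hd⟩ := ih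
    obtain ⟨g', hw', hk⟩ := hw.extend (w := w) (.inr e) (fun m hm =>
      ⟨fun _ => n, fun h' => absurd ⟨(hd m hm).1 rfl, e⟩ h'⟩)
    refine ⟨k + 1, g', hw', by omega, ?_⟩
    rintro m hm
    obtain rfl : k = m := by omega
    rw [hk]
    simp [e]

theorem AnS.of_anc {D : Dag V} {C : Set V} {a b : V} (h : D.AnS C b) (hab : D.Anc a b) :
    D.AnS C a := by
  obtain ⟨d, h1, h2⟩ := h
  exact ⟨d, Relation.ReflTransGen.trans hab h1, h2⟩

theorem IsWalk.loop {D : Dag V} {N C : Set V} {s t : V} {n : ℕ} {g : ℕ → V}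
    (h : D.IsWalk N C s t n g) (i : ℕ) (e : D.edge (g i) (g (i + 1))) (k : ℕ) :
    i + k + 1 ≤ n → D.AnS C (g i) ∨
      (D.Anc (g i) (g (i + k)) ∧ D.edge (g (i + k)) (g (i + k + 1))) := by
  induction k with
  | zero => exact fun _ => .inr ⟨.refl, e⟩
  | succ k ih =>
    intro hk
    rcases ih (by omega) with h' | ⟨h1, h2⟩
    · exact .inl h'
    · have h3 : D.Anc (g i) (g (i + k + 1)) := Relation.ReflTransGen.tail h1 h2
      rcases h.2.2.1 (i + k + 1) (by omega) with e' | e'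
      · exact .inr ⟨h3, e'⟩
      · exact .inl (((h.2.2.2 (i + k) (by omega)).1 ⟨h2, e'⟩).of_anc h3)

theorem IsWalk.splice {D : Dag V} {N C : Set V} {s t : V} {n : ℕ} {g : ℕ → V}
    (h : D.IsWalk N C s t n g) (i j : ℕ) (hij : i < j) (hj : j ≤ n) (e : g i = g j) :
    ∃ g', D.IsWalk N C s t (n - (j - i)) g' := by
  obtain ⟨δ, rfl⟩ : ∃ δ, j = i + 1 + δ := ⟨j - i - 1, by omega⟩
  have le : ∀ k, k ≤ i → (fun k => if k ≤ i then g k else g (k + (1 + δ))) k = g k :=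
    fun k hk => if_pos hk
  have ge : ∀ k, i ≤ k → (fun k => if k ≤ i then g k else g (k + (1 + δ))) k
      = g (k + (1 + δ)) := by
    intro k hk
    rcases hk.eq_or_lt with rfl | hk
    · rw [le _ le_rfl, e]; congr 1; omega
    · exact if_neg (by omega)
  refine ⟨fun k => if k ≤ i then g k else g (k + (1 + δ)), ?_, ?_, ?_, ?_⟩
  · rw [le 0 (by omega)]; exact h.1
  · rw [ge _ (by omega), ← h.2.1]; congr 1; omega
  · intro k hk
    rcases Nat.lt_or_ge k i with h' | h'
    · rw [le k (by omega), le (k + 1) (by omega)]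
      exact h.2.2.1 k (by omega)
    · rw [ge k (by omega), ge (k + 1) (by omega)]
      have := h.2.2.1 (k + (1 + δ)) (by omega)
      rwa [show k + (1 + δ) + 1 = k + 1 + (1 + δ) by omega] at this
  · intro k hk
    rcases Nat.lt_trichotomy (k + 1) i with h' | h' | h'
    · rw [le k (by omega), le (k + 1) (by omega), le (k + 2) (by omega)]
      exact h.2.2.2 k (by omega)
    · subst h'
      rw [le k (by omega), le (k + 1) (by omega), ge (k + 2) (by omega)]
      have a1 := h.2.2.2 k (by omega)
      have a2 := h.2.2.2 (k + 1 + δ) (by omega)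
      rw [show k + 1 + δ + 1 = k + 1 + 1 + δ by omega, ← e,
        show k + 1 + δ + 2 = k + 2 + (1 + δ) by omega] at a2
      constructor
      · rintro ⟨e1, e2⟩
        by_cases c1 : D.edge (g (k + 2)) (g (k + 1))
        · exact a1.1 ⟨e1, c1⟩
        by_cases c2 : D.edge (g (k + 1 + δ)) (g (k + 1))
        · exact a2.1 ⟨c2, e2⟩
        have e3 : D.edge (g (k + 1)) (g (k + 1 + 1)) :=
          (h.2.2.1 (k + 1) (by omega)).resolve_right c1
        rcases h.loop (k + 1) e3 δ (by omega) with h' | h'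
        · exact h'
        · rw [show k + 1 + δ + 1 = k + 1 + 1 + δ by omega, ← e] at h'
          exact absurd h'.2 c2
      · intro hn
        by_cases c1 : D.edge (g k) (g (k + 1))
        · exact a2.2 fun h' => hn ⟨c1, h'.2⟩
        · exact a1.2 fun h' => c1 h'.1
    · rw [ge k (by omega), ge (k + 1) (by omega), ge (k + 2) (by omega)]
      have := h.2.2.2 (k + (1 + δ)) (by omega)
      rwa [show k + (1 + δ) + 1 = k + 1 + (1 + δ) by omega,
        show k + (1 + δ) + 2 = k + 2 + (1 + δ) by omega] at this

theorem dSep_of_not_reach (D : Dag V) (s t : V) (S : Set V)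
    (h : D.dSep s t S) (d : Bool) : ¬ D.Reach (S \ {s}) S s t d := by
  classical
  intro hr
  obtain ⟨n, g, hw, -⟩ := hr.walk
  have hex : ∃ n, ∃ g, D.IsWalk (S \ {s}) S s t n g := ⟨n, g, hw⟩
  obtain ⟨g, hw⟩ := Nat.find_spec hex
  have hmin := fun m => @Nat.find_min _ _ hex m
  generalize Nat.find hex = n at hw hmin
  have inj : ∀ i j, i < j → j ≤ n → g i ≠ g j := by
    intro i j hij hj e
    exact hmin (n - (j - i)) (by omega) (hw.splice i j hij hj e)
  let p : GPath D.Adj s t :=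
    { n := n
      f := fun i => g i
      inj := by
        intro i j e
        dsimp only at e
        rcases lt_trichotomy i.1 j.1 with h | h | h
        · exact absurd e (inj _ _ h (by omega))
        · exact Fin.ext h
        · exact absurd e.symm (inj _ _ h (by omega))
      first := hw.1
      last := hw.2.1
      adj := fun i => hw.2.2.1 i i.2 }
  obtain ⟨i, h0, hn, hb⟩ := h p
  change i < n at hn
  obtain ⟨k, rfl⟩ : ∃ k, i = k + 1 := ⟨i - 1, by omega⟩
  have ha := hw.2.2.2 k (by omega)
  have hc : p.ColliderAt D.edge (k + 1) ↔
      D.edge (g k) (g (k + 1)) ∧ D.edge (g (k + 2)) (g (k + 1)) :=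
    ⟨fun ⟨_, _, h⟩ => h, fun h => ⟨h0, hn, h⟩⟩
  rw [hc] at hb
  change (_ ∧ g (k + 1) ∈ S) ∨ (_ ∧ ∀ d, D.Anc (g (k + 1)) d → d ∉ S) at hb
  rcases hb with ⟨h1, h2⟩ | ⟨h1, h2⟩
  · refine ha.2 h1 ⟨h2, fun h => ?_⟩
    exact inj 0 (k + 1) (by omega) (by omega) (hw.1.trans (Eq.symm h))
  · obtain ⟨d, h3, h4⟩ := ha.1 h1
    exact h2 d h3 h4

theorem dSep_iff (D : Dag V) (s t : V) (S : Set V) :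
    D.dSep s t S ↔ ∀ d, ¬ D.Reach (S \ {s}) S s t d := by
  refine ⟨D.dSep_of_not_reach s t S, fun h p => ?_⟩
  by_contra hb
  have key : ∀ i (hi : i ≤ p.n), ∃ d, D.Reach (S \ {s}) S s (p.f ⟨i, by omega⟩) d ∧
      (d = true → ∃ _ : 0 < i, D.edge (p.f ⟨i - 1, by omega⟩) (p.f ⟨i, by omega⟩)) ∧
      (d = false → ∀ _ : 0 < i, D.edge (p.f ⟨i, by omega⟩) (p.f ⟨i - 1, by omega⟩)) := by
    intro i
    induction i with
    | zero =>
      intro _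
      refine ⟨false, ?_, by simp, by simp⟩
      rw [p.first]
      exact .start
    | succ i ih =>
      intro hi
      obtain ⟨d, hr, ht, hf⟩ := ih (by omega)
      have hadj : D.Adj (p.f ⟨i, by omega⟩) (p.f ⟨i + 1, by omega⟩) := p.adj ⟨i, hi⟩
      have fin1 : D.edge (p.f ⟨i, by omega⟩) (p.f ⟨i + 1, by omega⟩) →
          p.f ⟨i, by omega⟩ ∉ S \ {s} → ∃ d, D.Reach (S \ {s}) S s (p.f ⟨i + 1, by omega⟩) d ∧
          (d = true → ∃ _ : 0 < i + 1, D.edge (p.f ⟨i, by omega⟩) (p.f ⟨i + 1, by omega⟩)) ∧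
          (d = false → ∀ _ : 0 < i + 1, D.edge (p.f ⟨i + 1, by omega⟩) (p.f ⟨i, by omega⟩)) :=
        fun e n => ⟨true, .fwd hr n e, fun _ => ⟨by omega, e⟩, by simp⟩
      rcases Nat.eq_zero_or_pos i with h0 | h0
      · subst h0
        have hN : p.f ⟨0, by omega⟩ ∉ S \ {s} := by rw [p.first]; simp
        rcases hadj with e | e
        · exact fin1 e hN
        · cases d with
          | true => obtain ⟨h, _⟩ := ht rfl; omega
          | false => exact ⟨false, .bwdOut hr hN e, by simp, fun _ _ => e⟩
      · have hnb := fun h => hb ⟨i, h0, hi, h⟩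
        have noncol : ¬ p.ColliderAt D.edge i → p.f ⟨i, by omega⟩ ∉ S \ {s} :=
          fun hc hS => hnb (.inl ⟨hc, hS.1⟩)
        have col : p.ColliderAt D.edge i → D.AnS S (p.f ⟨i, by omega⟩) := by
          intro hc
          by_contra hn
          exact hnb (.inr ⟨hc, fun d h1 h2 => hn ⟨d, h1, h2⟩⟩)
        rcases hadj with e | e
        · exact fin1 e (noncol fun ⟨_, _, h⟩ => D.asym e h.2)
        · cases d with
          | true =>
            obtain ⟨_, e'⟩ := ht rfl
            exact ⟨false, .bwdIn hr (col ⟨h0, hi, e', e⟩) e, by simp, fun _ _ => e⟩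
          | false =>
            have e' := hf rfl h0
            exact ⟨false, .bwdOut hr (noncol fun ⟨_, _, h⟩ => D.asym e' h.1) e, by simp,
              fun _ _ => e⟩
  obtain ⟨d, hr, -⟩ := key p.n le_rfl
  rw [p.last] at hr
  exact h d hr

theorem not_dSep_of_adj {D : Dag V} {a b : V} (h : D.Adj a b) (S : Set V) : ¬ D.dSep a b S := by
  rw [dSep_iff]
  intro h'
  have hN : a ∉ S \ {a} := by simp
  rcases h with e | e
  · exact h' _ (.fwd .start hN e)
  · exact h' _ (.bwdOut .start hN e)

theorem exists_sep_aux (D : Dag V) {a b : V} (h : ¬ D.Adj a b) (ne : a ≠ b)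
    (hn : ¬ D.Anc a b) : ∃ S, D.dSep a b S := by
  refine ⟨D.Pa a, (D.dSep_iff _ _ _).2 fun d hr => ?_⟩
  have key : ∀ {v d}, D.Reach (D.Pa a \ {a}) (D.Pa a) a v d →
      (v = a ∧ d = false) ∨ (D.edge v a ∧ d = false) ∨ (d = true ∧ D.Anc a v) := by
    intro v d hr
    induction hr with
    | start => exact .inl ⟨rfl, rfl⟩
    | @fwd v w d _ n e ih =>
      right; right
      refine ⟨rfl, ?_⟩
      rcases ih with ⟨rfl, -⟩ | ⟨h, -⟩ | ⟨-, h⟩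
      · exact .single e
      · exact absurd ⟨h, (Adj.ne (.inl h) : v ≠ a)⟩ n
      · exact .tail h e
    | @bwdOut v w _ n e ih =>
      rcases ih with ⟨rfl, -⟩ | ⟨h, -⟩ | ⟨h, -⟩
      · exact .inr (.inl ⟨e, rfl⟩)
      · exact absurd ⟨h, (Adj.ne (.inl h) : v ≠ a)⟩ n
      · cases h
    | @bwdIn v w _ n e ih =>
      rcases ih with ⟨-, h⟩ | ⟨-, h⟩ | ⟨-, h⟩
      · cases h
      · cases h
      · obtain ⟨q, h1, h2⟩ := n
        exact absurd (Relation.ReflTransGen.trans h h1) (D.acyclic q a h2)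
  rcases key hr with ⟨rfl, -⟩ | ⟨h', -⟩ | ⟨-, h'⟩
  · exact ne rfl
  · exact h (.inr h')
  · exact hn h'

theorem exists_sep (D : Dag V) {a b : V} (h : ¬ D.Adj a b) (ne : a ≠ b) :
    ∃ S, D.dSep a b S ∨ D.dSep b a S := by
  by_cases hn : D.Anc a b
  · obtain ⟨S, hS⟩ := D.exists_sep_aux (a := b) (b := a) (fun h' => h h'.symm) ne.symm (by
      intro h'
      rcases Relation.ReflTransGen.cases_head hn with h1 | ⟨c, h1, h2⟩
      · exact ne h1
      · exact D.acyclic a c h1 (h2.trans h'))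
    exact ⟨S, .inr hS⟩
  · obtain ⟨S, hS⟩ := D.exists_sep_aux h ne hn
    exact ⟨S, .inl hS⟩

theorem MEquiv.symm {D D' : Dag V} (h : D.MEquiv D') : D'.MEquiv D :=
  fun x y S => (h x y S).symm

theorem MEquiv.trans {D D' D'' : Dag V} (h : D.MEquiv D') (h' : D'.MEquiv D'') : D.MEquiv D'' :=
  fun x y S => (h x y S).trans (h' x y S)

theorem MEquiv.adj {D D' : Dag V} (h : D.MEquiv D') {a b : V} (ha : D.Adj a b) : D'.Adj a b := by
  by_contra hn
  obtain ⟨S, hS | hS⟩ := D'.exists_sep hn ha.ne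
  · exact not_dSep_of_adj ha S ((h _ _ _).2 hS)
  · exact not_dSep_of_adj ha.symm S ((h _ _ _).2 hS)

theorem IsV.symm {D : Dag V} {a b c : V} (h : D.IsV a b c) : D.IsV c b a :=
  ⟨h.2.1, h.1, fun h' => h.2.2.1 h'.symm, h.2.2.2.symm⟩

theorem IsV.sep {D D' : Dag V} (h : D.MEquiv D') {a b c : V} (hv : D.IsV a b c) {S : Set V}
    (hS : D.dSep a c S) : D'.edge a b ∧ D'.edge c b := by
  have ab : D'.Adj a b := h.adj (.inl hv.1)
  have cb : D'.Adj c b := h.adj (.inl hv.2.1)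
  have hS' := (h _ _ _).1 hS
  rw [dSep_iff] at hS hS'
  have ha : a ∉ S \ {a} := by simp
  have hb : b ∉ S := fun hb => hS _ (.bwdIn (.fwd .start ha hv.1) ⟨b, .refl, hb⟩ hv.2.1)
  have hb' : b ∉ S \ {a} := fun h => hb h.1
  rcases cb with cb | bc
  · rcases ab with ab | ba
    · exact ⟨ab, cb⟩
    · exact absurd (.bwdOut (.bwdOut .start ha ba) hb' cb) (hS' _)
  · rcases ab with ab | ba
    · exact absurd (.fwd (.fwd .start ha ab) hb' bc) (hS' _)
    · exact absurd (.fwd (.bwdOut .start ha ba) hb' bc) (hS' _)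

theorem MEquiv.isV {D D' : Dag V} (h : D.MEquiv D') {a b c : V} (hv : D.IsV a b c) :
    D'.IsV a b c := by
  have h2 : ¬ D'.Adj a c := fun h' => hv.2.2.1 (h.symm.adj h')
  obtain ⟨S, hS | hS⟩ := D.exists_sep hv.2.2.1 hv.2.2.2
  · have := hv.sep h hS
    exact ⟨this.1, this.2, h2, hv.2.2.2⟩
  · have := hv.symm.sep h hS
    exact ⟨this.2, this.1, h2, hv.2.2.2⟩

theorem MEquiv.same {D D' : Dag V} (h : D.MEquiv D') : D.Same D' :=
  ⟨fun _ _ => ⟨h.adj, h.symm.adj⟩, fun _ _ _ => ⟨h.isV, h.symm.isV⟩⟩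

/-- The second graph arises from the first by reversing the covered edge `x → y`. -/
structure Flip (D D' : Dag V) (x y : V) : Prop where
  e : D.edge x y
  e' : D'.edge y x
  cov : ∀ z, z ≠ x → (D.edge z y ↔ D.edge z x)
  eq : ∀ a b, ¬ (a = x ∧ b = y) → ¬ (a = y ∧ b = x) → (D.edge a b ↔ D'.edge a b)

namespace Flip

variable {D D' : Dag V} {x y : V}

theorem ne (h : D.Flip D' x y) : x ≠ y := Adj.ne (.inl h.e)

theorem symm (h : D.Flip D' x y) : D'.Flip D y x := by
  refine ⟨h.e', h.e, fun z hz => ?_, fun a b h1 h2 => (h.eq a b h2 h1).symm⟩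
  by_cases hx : z = x
  · subst hx
    exact iff_of_false (D'.irr z) (D'.asym h.e')
  · rw [← h.eq z x (fun h => hx h.1) (fun h => hz h.1),
      ← h.eq z y (fun h => hx h.1) (fun h => hz h.1), h.cov z hx]

theorem par (h : D.Flip D' x y) {z : V} (hz : z ≠ x) (hz' : D.edge z x ∨ D.edge z y) :
    D'.edge z x ∧ D'.edge z y := by
  have hx : D.edge z x := hz'.elim id (h.cov z hz).1
  have hy : z ≠ y := by rintro rfl; exact D.asym h.e hx
  exact ⟨(h.eq z x (fun h => hz h.1) (fun h => hy h.1)).1 hx,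
    (h.eq z y (fun h => hz h.1) (fun h => hy h.1)).1 ((h.cov z hz).2 hx)⟩

theorem keep (h : D.Flip D' x y) {a b : V} (e : D.edge a b) (hn : ¬ (a = x ∧ b = y)) :
    D'.edge a b :=
  (h.eq a b hn (by rintro ⟨rfl, rfl⟩; exact D.asym h.e e)).1 e

theorem adj (h : D.Flip D' x y) {a b : V} (ha : D.Adj a b) : D'.Adj a b := by
  have key : ∀ {a b}, D.edge a b → D'.Adj a b := by
    intro a b e
    by_cases hn : a = x ∧ b = y
    · rw [hn.1, hn.2]; exact .inr h.e'
    · exact .inl (h.keep e hn)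
  exact ha.elim key fun e => (key e).symm

theorem isV (h : D.Flip D' x y) {a b c : V} (hv : D.IsV a b c) : D'.IsV a b c := by
  have key : ∀ {a b c}, D.IsV a b c → D'.edge a b := by
    intro a b c hv
    refine h.keep hv.1 ?_
    rintro ⟨rfl, rfl⟩
    exact hv.2.2.1 (.inr ((h.cov c hv.2.2.2.symm).1 hv.2.1))
  exact ⟨key hv, key hv.symm, fun h' => hv.2.2.1 (h.symm.adj h'), hv.2.2.2⟩

theorem same (h : D.Flip D' x y) : D.Same D' :=
  ⟨fun _ _ => ⟨h.adj, h.symm.adj⟩, fun _ _ _ => ⟨h.isV, h.symm.isV⟩⟩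

theorem anc (h : D.Flip D' x y) {v d : V} (hv : D.Anc v d) :
    D'.Anc v d ∨ (v = x ∧ D'.Anc y d) := by
  induction hv using Relation.ReflTransGen.head_induction_on with
  | refl => exact .inl .refl
  | @head v w e _ ih =>
    rcases ih with ih | ⟨rfl, ih⟩
    · by_cases hn : v = x ∧ w = y
      · obtain ⟨rfl, rfl⟩ := hn
        exact .inr ⟨rfl, ih⟩
      · exact .inl (.head (h.keep e hn) ih)
    · exact .inl (.head (h.par (Adj.ne (.inl e)) (.inl e)).2 ih)

theorem anS (h : D.Flip D' x y) {C : Set V} {v : V} (hv : D.AnS C v) :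
    D'.AnS C v ∨ (v = x ∧ D'.AnS C y) := by
  obtain ⟨d, h1, h2⟩ := hv
  rcases h.anc h1 with h3 | ⟨h3, h4⟩
  · exact .inl ⟨d, h3, h2⟩
  · exact .inr ⟨h3, d, h4, h2⟩

theorem anS' (h : D.Flip D' x y) {C : Set V} {v : V} (hv : D.AnS C v) (hx : v ≠ x) :
    D'.AnS C v := (h.anS hv).resolve_right fun h => hx h.1

/-- The simulation invariant. -/
def Inv (D' : Dag V) (N C : Set V) (s x y : V) (v : V) (d : Bool) : Prop :=
  (v ≠ x → v ≠ y → D'.Reach N C s v d) ∧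
  (v = x → d = true → D'.Reach N C s x true ∧ D'.Reach N C s y true) ∧
  (v = x → d = false → D'.Reach N C s x false ∨
    (D'.Reach N C s x true ∧ D'.Reach N C s y true ∧ D'.AnS C y) ∨
    (D'.Reach N C s x true ∧ D'.Reach N C s y false ∧ y ∉ N)) ∧
  (v = y → d = true → (D'.Reach N C s x true ∧ D'.Reach N C s y true) ∨
    (D'.Reach N C s x false ∧ x ∉ N ∧ D'.Reach N C s y false) ∨
    (D'.Reach N C s x true ∧ D'.Reach N C s y false ∧ y ∉ N)) ∧
  (v = y → d = false → D'.Reach N C s y false)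

theorem Inv.some {N C : Set V} {s v : V} {d : Bool} (h : Inv D' N C s x y v d) :
    ∃ d', D'.Reach N C s v d' := by
  obtain ⟨h1, h2, h3, h4, h5⟩ := h
  by_cases hx : v = x
  · subst hx
    cases d with
    | true => exact ⟨_, (h2 rfl rfl).1⟩
    | false => rcases h3 rfl rfl with h | h | h
               · exact ⟨_, h⟩
               · exact ⟨_, h.1⟩
               · exact ⟨_, h.1⟩
  by_cases hy : v = y
  · subst hy
    cases d with
    | false => exact ⟨_, h5 rfl rfl⟩
    | true => rcases h4 rfl rfl with h | h | h
              · exact ⟨_, h.2⟩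
              · exact ⟨_, h.2.2⟩
              · exact ⟨_, h.2.1⟩
  exact ⟨_, h1 hx hy⟩

theorem inv_of_false {N C : Set V} {s v : V} (h : D'.Reach N C s v false) :
    Inv D' N C s x y v false := by
  refine ⟨fun _ _ => h, fun _ h => by simp at h, ?_, fun _ h => by simp at h, ?_⟩
  · rintro rfl -; exact .inl h
  · rintro rfl -; exact h

theorem inv (h : D.Flip D' x y) {N C : Set V} {s v : V} {d : Bool}
    (hr : D.Reach N C s v d) : Inv D' N C s x y v d := by
  have hne := h.ne
  induction hr with
  | start => exact inv_of_false .start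
  | @fwd v w d _ n e ih =>
    have hs := ih.some
    obtain ⟨d', hs⟩ := hs
    obtain ⟨h1, h2, h3, h4, h5⟩ := ih
    by_cases hv : v = x ∧ w = y
    · obtain ⟨rfl, rfl⟩ := hv
      refine ⟨fun _ h => absurd rfl h, fun h => absurd h.symm hne, fun h => absurd h.symm hne,
        fun _ _ => ?_, fun _ h => by simp at h⟩
      cases d with
      | true => exact .inl (h2 rfl rfl)
      | false =>
        rcases h3 rfl rfl with h' | h' | h'
        · exact .inr (.inl ⟨h', n, .bwdOut h' n h.e'⟩)
        · exact .inl ⟨h'.1, h'.2.1⟩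
        · exact .inr (.inr h')
    · have e' := h.keep e hv
      refine ⟨fun _ _ => .fwd hs n e', ?_, fun _ h => by simp at h, ?_, fun _ h => by simp at h⟩
      · rintro rfl -
        have := h.par (Adj.ne (.inl e)) (.inl e)
        exact ⟨.fwd hs n this.1, .fwd hs n this.2⟩
      · rintro rfl -
        have := h.par (fun h => hv ⟨h, rfl⟩) (.inr e)
        exact .inl ⟨.fwd hs n this.1, .fwd hs n this.2⟩
  | @bwdOut v w _ n e ih =>
    obtain ⟨h1, h2, h3, h4, h5⟩ := ih
    by_cases hvx : v = x
    · subst hvx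
      have := h.par (Adj.ne (.inl e)) (.inl e)
      apply inv_of_false
      rcases h3 rfl rfl with h' | h' | h'
      · exact .bwdOut h' n this.1
      · exact .bwdIn h'.2.1 h'.2.2 this.2
      · exact .bwdOut h'.2.1 h'.2.2 this.2
    by_cases hvy : v = y
    · subst hvy
      have hy := h5 rfl rfl
      by_cases hw : w = x
      · subst hw
        exact ⟨fun h => absurd rfl h, fun _ h => by simp at h,
          fun _ _ => .inr (.inr ⟨.fwd hy n h.e', hy, n⟩), fun h => absurd h hne,
          fun h => absurd h hne⟩
      · exact inv_of_false (.bwdOut hy n (h.par hw (.inr e)).2)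
    · exact inv_of_false (.bwdOut (h1 hvx hvy) n (h.keep e fun h => hvy h.2))
  | @bwdIn v w _ n e ih =>
    obtain ⟨h1, h2, h3, h4, h5⟩ := ih
    by_cases hvx : v = x
    · subst hvx
      have := h.par (Adj.ne (.inl e)) (.inl e)
      apply inv_of_false
      have h' := h2 rfl rfl
      rcases h.anS n with hn | hn
      · exact .bwdIn h'.1 hn this.1
      · exact .bwdIn h'.2 hn.2 this.2
    have hn := h.anS' n hvx
    by_cases hvy : v = y
    · subst hvy
      have hy := h4 rfl rfl
      by_cases hw : w = x
      · subst hw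
        refine ⟨fun h => absurd rfl h, fun _ h => by simp at h,
          fun _ _ => ?_, fun h => absurd h hne,
          fun h => absurd h hne⟩
        rcases hy with h' | h' | h'
        · exact .inr (.inl ⟨h'.1, h'.2, hn⟩)
        · exact .inl h'.1
        · exact .inr (.inr h')
      · have := h.par hw (.inr e)
        apply inv_of_false
        rcases hy with h' | h' | h'
        · exact .bwdIn h'.2 hn this.2
        · exact .bwdOut h'.1 h'.2.1 this.1
        · exact .bwdOut h'.2.1 h'.2.2 this.2
    · exact inv_of_false (.bwdIn (h1 hvx hvy) hn (h.keep e fun h => hvy h.2))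

theorem mequiv (h : D.Flip D' x y) : D.MEquiv D' := by
  intro s t S
  rw [dSep_iff, dSep_iff]
  constructor
  · intro h1 d hr
    obtain ⟨d', hr'⟩ := (h.symm.inv hr).some
    exact h1 d' hr'
  · intro h1 d hr
    obtain ⟨d', hr'⟩ := (h.inv hr).some
    exact h1 d' hr'

end Flip

theorem exists_flip_covered (D : Dag V) {x y : V} (e : D.edge x y)
    (cov : ∀ z, z ≠ x → (D.edge z y ↔ D.edge z x)) : ∃ D' : Dag V, D.Flip D' x y := by
  have hne : x ≠ y := Adj.ne (.inl e)
  let E0 : V → V → Prop := fun a b => D.edge a b ∧ ¬ (a = x ∧ b = y)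
  let E : V → V → Prop := fun a b => E0 a b ∨ (a = y ∧ b = x)
  have toD : ∀ {a b}, Relation.TransGen E0 a b → Relation.TransGen D.edge a b :=
    fun h => Relation.TransGen.mono (fun _ _ (h : E0 _ _) => h.1) _ _ h
  have shift : ∀ {a}, Relation.TransGen E0 a y → Relation.TransGen E0 a x := by
    intro a h
    have key : ∀ {z}, E0 z y → E0 z x := fun {z} hz =>
      ⟨(cov z (fun h => hz.2 ⟨h, rfl⟩)).1 hz.1, fun h => hne h.2⟩
    cases h with
    | single h => exact .single (key h)
    | tail h1 h => exact .tail h1 (key h)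
  have nxy : ¬ Relation.TransGen E0 x y := fun h => D.transGen_irr x (toD (shift h))
  have form : ∀ {a b}, Relation.TransGen E a b →
      Relation.TransGen E0 a b ∨ (a = y ∧ (b = x ∨ Relation.TransGen E0 x b)) := by
    intro a b h
    induction h with
    | single h =>
      rcases h with h | h
      · exact .inl (.single h)
      · exact .inr ⟨h.1, .inl h.2⟩
    | @tail b c _ h ih =>
      rcases h with h | ⟨rfl, rfl⟩
      · rcases ih with ih | ⟨ha, rfl | ih⟩
        · exact .inl (ih.tail h)
        · exact .inr ⟨ha, .inr (.single h)⟩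
        · exact .inr ⟨ha, .inr (ih.tail h)⟩
      · rcases ih with ih | ⟨ha, ih | ih⟩
        · exact .inl (shift ih)
        · exact absurd ih.symm hne
        · exact absurd ih nxy
  refine ⟨⟨E, fun a b h h' => ?_⟩, e, .inr ⟨rfl, rfl⟩, cov, fun a b h1 h2 => ?_⟩
  · rcases form (Relation.TransGen.head' h h') with h | ⟨rfl, h | h⟩
    · exact D.transGen_irr a (toD h)
    · exact hne h.symm
    · exact nxy h
  · exact ⟨fun h => .inl ⟨h, h1⟩, fun h => h.elim (fun h => h.1) fun h => absurd h h2⟩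

theorem Same.symm {D D' : Dag V} (h : D.Same D') : D'.Same D :=
  ⟨fun a b => (h.1 a b).symm, fun a b c => (h.2 a b c).symm⟩

theorem Same.trans {D D' D'' : Dag V} (h : D.Same D') (h' : D'.Same D'') : D.Same D'' :=
  ⟨fun a b => (h.1 a b).trans (h'.1 a b), fun a b c => (h.2 a b c).trans (h'.2 a b c)⟩

theorem exists_covered [Finite V] {D D' : Dag V} (h : D.Same D')
    (hd : ∃ y x, D.edge x y ∧ D'.edge y x) :
    ∃ x y, D.edge x y ∧ D'.edge y x ∧ ∀ z, z ≠ x → (D.edge z y ↔ D.edge z x) := by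
  obtain ⟨y, ⟨x0, hx0⟩, hy⟩ := D.wf.has_min {y | ∃ x, D.edge x y ∧ D'.edge y x} hd
  obtain ⟨x, ⟨hx, hx'⟩, hmax⟩ := D.wf'.has_min {x | D.edge x y ∧ D'.edge y x} ⟨x0, hx0⟩
  have same : ∀ {a b}, D.edge a b → Relation.TransGen D.edge b y → D'.edge a b := by
    intro a b e hb
    exact ((h.1 a b).1 (.inl e)).resolve_right fun e' => hy b ⟨a, e, e'⟩ hb
  refine ⟨x, y, hx, hx', fun z hz => ⟨fun hzy => ?_, fun hzx => ?_⟩⟩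
  · have hadj : D.Adj z x := by
      by_contra hn
      have := (h.2 z y x).1 ⟨hzy, hx, hn, hz⟩
      exact D'.asym hx' this.2.1
    refine hadj.resolve_right fun hxz => ?_
    have e1 : D'.edge z y := ((h.1 z y).1 (.inl hzy)).resolve_right fun e' =>
      hmax z ⟨hzy, e'⟩ (.single hxz)
    exact D'.no3 e1 hx' (same hxz (.single hzy))
  · have e1 := same hzx (.single hx)
    have hzy : z ≠ y := by rintro rfl; exact D.asym hx hzx
    have hadj : D.Adj z y := by
      by_contra hn
      have := (h.2 z x y).2 ⟨e1, hx', fun h' => hn ((h.1 _ _).2 h'), hzy⟩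
      exact D.asym hx this.2.1
    exact D.tri hzx hx hadj

theorem Same.mequiv [Finite V] {D D' : Dag V} (h : D.Same D') : D.MEquiv D' := by
  generalize hn : {q : V × V | D.edge q.1 q.2 ∧ D'.edge q.2 q.1}.ncard = n
  induction n using Nat.strong_induction_on generalizing D with
  | _ n ih =>
    by_cases hd : ∃ y x, D.edge x y ∧ D'.edge y x
    · obtain ⟨x, y, e, e', cov⟩ := exists_covered h hd
      obtain ⟨D1, hf⟩ := D.exists_flip_covered e cov
      refine hf.mequiv.trans (ih _ ?_ (hf.same.symm.trans h) rfl)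
      rw [← hn]
      apply Set.ncard_lt_ncard _ (Set.toFinite _)
      rw [Set.ssubset_iff_of_subset]
      · exact ⟨(x, y), ⟨e, e'⟩, fun h' => D1.asym hf.e' h'.1⟩
      · rintro ⟨a, b⟩ ⟨h1, h2⟩
        refine ⟨hf.symm.keep h1 ?_, h2⟩
        rintro ⟨ha, hb⟩
        dsimp only at ha hb h2
        subst ha hb
        exact D'.asym e' h2
    · have : D.edge = D'.edge := by
        funext a b
        refine propext ⟨fun e => ?_, fun e => ?_⟩
        · exact ((h.1 a b).1 (.inl e)).resolve_right fun e' => hd ⟨b, a, e, e'⟩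
        · exact ((h.1 a b).2 (.inl e)).resolve_right fun e' => hd ⟨a, b, e', e⟩
      have : D = D' := by
        cases D; cases D'; cases this; rfl
      subst this
      exact fun _ _ _ => Iff.rfl

theorem cpDir_iff [Fintype V] (D : Dag V) (a b : V) : D.CpDir a b ↔ D.M a b := by
  constructor
  · intro h
    by_contra hn
    have e : D.edge a b := h D fun _ _ _ => Iff.rfl
    have hH : D.H a b := ⟨.inl e, hn, fun h' => D.asym e h'.edge⟩
    obtain ⟨D', hs, hD'⟩ := D.exists_flip b
    exact hD' a hH (h D' hs.mequiv)
  · exact fun h D' hD' => h.sound hD'.same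

end Dag

/-- If `X` and `W` are distinct nodes joined by an undirected edge in the
CPDAG `G` of the MEC of a DAG, then `Pa_G(X) ⊆ Pa_G(W)`: every node with a directed edge
into `X` in `G` also has a directed edge into `W` in `G`. -/
theorem cpPa_subset_cpPa_of_sibling
    {V : Type*} [Fintype V] (D : Dag V) (X W : V) (hXW : X ≠ W)
    (hsib : W ∈ D.CpSib X) :
    D.CpPa X ⊆ D.CpPa W := by
  intro P hP
  obtain ⟨h1, h2, h3⟩ := hsib
  rw [Dag.cpDir_iff] at h2 h3
  exact (D.cpDir_iff P W).2 (((D.cpDir_iff P X).1 hP).absorb ⟨h1, h2, h3⟩)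
end

section
/- Let G be the CPDAG of the Markov equivalence class of a DAG, let X and Y be distinct nodes, and let p be a possibly directed path from X to Y in G whose number of edges is minimal among all possibly directed paths from X to Y in G. Then p is unshielded. -/
variable {V : Type*}

namespace CpAux

open Relation

/-! ### Basic notions -/

theorem edge_irrefl (D : Dag V) (a : V) : ¬ D.edge a a :=
  fun h => D.acyclic a a h .refl

theorem edge_asymm (D : Dag V) {a b : V} (h : D.edge a b) : ¬ D.edge b a :=
  fun h' => D.acyclic a b h (.single h')

theorem edge_tri (D : Dag V) {a b c : V} (h : D.edge a b) (h' : D.edge b c) : ¬ D.edge c a :=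
  fun h'' => D.acyclic a b h ((ReflTransGen.single h').tail h'')

theorem adj_symm (D : Dag V) {a b : V} (h : D.Adj a b) : D.Adj b a := Or.symm h

theorem wf_edge [Finite V] (D : Dag V) : WellFounded (TransGen D.edge) := by
  have : IsTrans V (TransGen D.edge) := ⟨fun _ _ _ h h' => h.trans h'⟩
  have : Std.Irrefl (TransGen D.edge) := ⟨fun a h => by
    rcases TransGen.head'_iff.1 h with ⟨b, hb, hr⟩
    exact D.acyclic a b hb hr⟩
  exact Finite.wellFounded_of_trans_of_irrefl _

theorem wf_edge_flip [Finite V] (D : Dag V) :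
    WellFounded (fun a b => TransGen D.edge b a) := by
  have : IsTrans V (fun a b => TransGen D.edge b a) := ⟨fun _ _ _ h h' => h'.trans h⟩
  have : Std.Irrefl (fun a b => TransGen D.edge b a) := ⟨fun a h => by
    rcases TransGen.head'_iff.1 h with ⟨b, hb, hr⟩
    exact D.acyclic a b hb hr⟩
  exact Finite.wellFounded_of_trans_of_irrefl _

/-- an unshielded collider -/
def VS (D : Dag V) (a b c : V) : Prop :=
  D.edge a b ∧ D.edge c b ∧ ¬ D.Adj a c ∧ a ≠ c

def SameSV (D D' : Dag V) : Prop :=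
  (∀ a b, D.Adj a b ↔ D'.Adj a b) ∧ ∀ a b c, VS D a b c ↔ VS D' a b c

theorem SameSV.symm {D D' : Dag V} (h : SameSV D D') : SameSV D' D :=
  ⟨fun a b => (h.1 a b).symm, fun a b c => (h.2 a b c).symm⟩

theorem SameSV.trans {D D' D'' : Dag V} (h : SameSV D D') (h' : SameSV D' D'') : SameSV D D'' :=
  ⟨fun a b => (h.1 a b).trans (h'.1 a b), fun a b c => (h.2 a b c).trans (h'.2 a b c)⟩

/-! ### Reachability along active walks -/

def AnS (D : Dag V) (S : Set V) (v : V) : Prop := ∃ d, D.Anc v d ∧ d ∈ S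

def okout (S : Set V) (v : V) (f : Option Bool) : Prop := f = none ∨ v ∉ S

def okin (D : Dag V) (S : Set V) (v : V) : Option Bool → Prop
  | none => True
  | some true => AnS D S v
  | some false => v ∉ S

inductive Reach (D : Dag V) (S : Set V) (x : V) : V → Option Bool → Prop
  | start : Reach D S x x none
  | out {v f w} : Reach D S x v f → okout S v f → D.edge v w → Reach D S x w (some true)
  | inn {v f w} : Reach D S x v f → okin D S v f → D.edge w v → Reach D S x w (some false)

inductive AP (D : Dag V) (S : Set V) (x : V) : V → Option Bool → List V → Prop
  | start : AP D S x x none []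
  | out {v f w l} : AP D S x v f l → okout S v f → D.edge v w → w ∉ v :: l →
      AP D S x w (some true) (v :: l)
  | inn {v f w l} : AP D S x v f l → okin D S v f → D.edge w v → w ∉ v :: l →
      AP D S x w (some false) (v :: l)

theorem AnS.of_anc {D : Dag V} {S : Set V} {v w : V} (h : D.Anc w v) (h' : AnS D S v) :
    AnS D S w := by
  obtain ⟨d, hd, hs⟩ := h'
  exact ⟨d, ReflTransGen.trans h hd, hs⟩

theorem AP.trunc {D : Dag V} {S : Set V} {x v : V} {f : Option Bool} {l : List V}
    (h : AP D S x v f l) : ∀ w ∈ l, ∃ f' l', AP D S x w f' l' ∧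
      (f' = some false → w ∉ S) ∧
      (f' = some true → AnS D S w ∨ (f = some true ∧ D.Anc w v)) := by
  induction h with
  | start => simp
  | @out u g v l0 hu ho he hn ih =>
    intro w hw
    rcases List.mem_cons.1 hw with rfl | hw
    · refine ⟨g, l0, hu, ?_, ?_⟩
      · rintro rfl; simpa [okout] using ho
      · rintro rfl; exact Or.inr ⟨rfl, ReflTransGen.single he⟩
    · obtain ⟨f', l', h1, h2, h3⟩ := ih w hw
      refine ⟨f', l', h1, h2, fun hf => ?_⟩
      rcases h3 hf with h | ⟨_, h⟩
      · exact Or.inl h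
      · exact Or.inr ⟨rfl, ReflTransGen.tail h he⟩
  | @inn u g v l0 hu ho he hn ih =>
    intro w hw
    rcases List.mem_cons.1 hw with rfl | hw
    · refine ⟨g, l0, hu, ?_, ?_⟩
      · rintro rfl; simpa [okin] using ho
      · rintro rfl; exact Or.inl ho
    · obtain ⟨f', l', h1, h2, h3⟩ := ih w hw
      refine ⟨f', l', h1, h2, fun hf => ?_⟩
      rcases h3 hf with h | ⟨rfl, h⟩
      · exact Or.inl h
      · exact Or.inl (AnS.of_anc h ho)

theorem Reach.toAP {D : Dag V} {S : Set V} {x v : V} {f : Option Bool}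
    (h : Reach D S x v f) : ∃ f' l, AP D S x v f' l ∧
      (okin D S v f → okin D S v f') ∧ (okout S v f → okout S v f') := by
  induction h with
  | start => exact ⟨none, [], .start, id, id⟩
  | @out v f w hv ho he ih =>
    obtain ⟨f', l, hp, h1, h2⟩ := ih
    by_cases hw : w ∈ v :: l
    · rcases List.mem_cons.1 hw with rfl | hw
      · exact absurd he (edge_irrefl D _)
      · obtain ⟨f'', l'', hp', k1, k2⟩ := hp.trunc w hw
        refine ⟨f'', l'', hp', ?_, ?_⟩
        · rcases f'' with _ | _ | _ <;> simp_all [okin]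
        · intro h; right; simpa [okout] using h
    · exact ⟨_, _, .out hp (h2 ho) he hw, id, id⟩
  | @inn v f w hv ho he ih =>
    obtain ⟨f', l, hp, h1, h2⟩ := ih
    by_cases hw : w ∈ v :: l
    · rcases List.mem_cons.1 hw with rfl | hw
      · exact absurd he (edge_irrefl D _)
      · obtain ⟨f'', l'', hp', k1, k2⟩ := hp.trunc w hw
        refine ⟨f'', l'', hp', ?_, ?_⟩
        · rcases f'' with _ | _ | _
          · simp [okin]
          · exact id
          · intro _
            rcases k2 rfl with h | ⟨rfl, h⟩
            · exact h
            · exact AnS.of_anc h (h1 ho)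
        · intro h; right; simpa [okout] using h
    · exact ⟨_, _, .inn hp (h1 ho) he hw, id, id⟩

/-- unblocked path, phrased with functions on the naturals -/
structure UP (D : Dag V) (S : Set V) (x v : V) (n : ℕ) (g : ℕ → V) : Prop where
  inj : ∀ i j, i ≤ n → j ≤ n → g i = g j → i = j
  first : g 0 = x
  last : g n = v
  adj : ∀ i, i < n → D.Adj (g i) (g (i + 1))
  coll : ∀ i, i + 1 < n → D.edge (g i) (g (i + 1)) → D.edge (g (i + 2)) (g (i + 1)) →
    AnS D S (g (i + 1))
  ncoll : ∀ i, i + 1 < n → ¬ (D.edge (g i) (g (i + 1)) ∧ D.edge (g (i + 2)) (g (i + 1))) →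
    g (i + 1) ∉ S

theorem AP.toUP {D : Dag V} {S : Set V} {x v : V} {f : Option Bool} {l : List V}
    (h : AP D S x v f l) : ∃ n g, UP D S x v n g ∧ (∀ i ≤ n, g i ∈ v :: l) ∧
      (f = none → n = 0) ∧ (f = some true → ∃ m, n = m + 1 ∧ D.edge (g m) (g n)) ∧
      (f = some false → ∃ m, n = m + 1 ∧ D.edge (g n) (g m)) := by
  have key : ∀ (n : ℕ) (g : ℕ → V) (v w : V) (l : List V), UP D S x v n g →
      (∀ i ≤ n, g i ∈ v :: l) → w ∉ v :: l → D.Adj v w →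
      (∀ m, n = m + 1 → D.edge (g m) v → D.edge w v → AnS D S v) →
      (∀ m, n = m + 1 → ¬ (D.edge (g m) v ∧ D.edge w v) → v ∉ S) →
      UP D S x w (n + 1) (Function.update g (n + 1) w) ∧
      (∀ i ≤ n + 1, Function.update g (n + 1) w i ∈ w :: v :: l) ∧
      Function.update g (n + 1) w n = v ∧ Function.update g (n + 1) w (n + 1) = w := by
    intro n g v w l hU hm hw ha hc hnc
    have e1 : ∀ i, i ≤ n → Function.update g (n + 1) w i = g i := fun i hi =>
      Function.update_of_ne (by omega) _ _
    have e2 : Function.update g (n + 1) w (n + 1) = w := Function.update_self _ _ _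
    generalize Function.update g (n + 1) w = g' at e1 e2
    have hl := hU.last
    refine ⟨⟨?_, ?_, e2, ?_, ?_, ?_⟩, ?_, by rw [e1 n le_rfl, hl], e2⟩
    · intro i j hi hj hij
      rcases Nat.lt_or_ge n i with h1 | h1 <;> rcases Nat.lt_or_ge n j with h2 | h2
      · omega
      · obtain rfl : i = n + 1 := by omega
        rw [e2, e1 j h2] at hij
        exact absurd (hij ▸ hm j h2) hw
      · obtain rfl : j = n + 1 := by omega
        rw [e2, e1 i h1] at hij
        exact absurd (hij ▸ hm i h1) hw
      · rw [e1 i h1, e1 j h2] at hij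
        exact hU.inj i j h1 h2 hij
    · rw [e1 0 (by omega), hU.first]
    · intro i hi
      rcases Nat.lt_or_ge i n with h | h
      · rw [e1 i (by omega), e1 (i+1) (by omega)]; exact hU.adj i h
      · obtain rfl : i = n := by omega
        rw [e1 i le_rfl, e2, hl]; exact ha
    · intro i hi
      rw [e1 i (by omega), e1 (i+1) (by omega)]
      rcases Nat.lt_or_ge (i+1) n with h | h
      · rw [e1 (i+2) (by omega)]; exact hU.coll i h
      · obtain rfl : n = i + 1 := by omega
        rw [e2, hl]; exact hc i rfl
    · intro i hi
      rw [e1 i (by omega), e1 (i+1) (by omega)]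
      rcases Nat.lt_or_ge (i+1) n with h | h
      · rw [e1 (i+2) (by omega)]; exact hU.ncoll i h
      · obtain rfl : n = i + 1 := by omega
        rw [e2, hl]; exact hnc i rfl
    · intro i hi
      rcases Nat.lt_or_ge n i with h1 | h1
      · obtain rfl : i = n + 1 := by omega
        rw [e2]; simp
      · rw [e1 i h1]; exact List.mem_cons_of_mem _ (hm i h1)
  induction h with
  | start =>
    refine ⟨0, fun _ => x, ⟨?_, rfl, rfl, ?_, ?_, ?_⟩, ?_, ?_, ?_, ?_⟩ <;> simp
  | @out v f w l hv ho he hn ih =>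
    obtain ⟨n, g, hU, hm, f1, f2, f3⟩ := ih
    obtain ⟨k1, k2, k3, k4⟩ := key n g v w l hU hm hn (Or.inl he)
      (fun m _ _ h => absurd h (edge_asymm D he)) (by
        intro m hmn _
        rcases ho with rfl | h
        · have := f1 rfl; omega
        · exact h)
    refine ⟨n + 1, _, k1, k2, by simp, fun _ => ⟨n, rfl, ?_⟩, by simp⟩
    rw [k3, k4]; exact he
  | @inn v f w l hv ho he hn ih =>
    obtain ⟨n, g, hU, hm, f1, f2, f3⟩ := ih
    have hl := hU.last
    obtain ⟨k1, k2, k3, k4⟩ := key n g v w l hU hm hn (Or.inr he) (by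
        intro m hmn h1 h2
        rcases f with _ | _ | _
        · have := f1 rfl; omega
        · obtain ⟨m', hm', h3⟩ := f3 rfl
          obtain rfl : m = m' := by omega
          rw [hl] at h3
          exact absurd h1 (edge_asymm D h3)
        · exact ho) (by
        intro m hmn h1
        rcases f with _ | _ | _
        · have := f1 rfl; omega
        · exact ho
        · obtain ⟨m', hm', h3⟩ := f2 rfl
          obtain rfl : m = m' := by omega
          rw [hl] at h3
          exact absurd ⟨h3, he⟩ h1)
    refine ⟨n + 1, _, k1, k2, by simp, by simp, fun _ => ⟨n, rfl, ?_⟩⟩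
    rw [k3, k4]; exact he

theorem UP.toReach {D : Dag V} {S : Set V} {x v : V} {n : ℕ} {g : ℕ → V}
    (h : UP D S x v n g) : ∃ f, Reach D S x v f := by
  have : ∀ i, i ≤ n → ∃ f, Reach D S x (g i) f ∧ (f = none → i = 0) ∧
      (f = some true → ∃ m, i = m + 1 ∧ D.edge (g m) (g i)) ∧
      (f = some false → ∃ m, i = m + 1 ∧ D.edge (g i) (g m)) := by
    intro i
    induction i with
    | zero => intro _; exact ⟨none, h.first ▸ .start, by simp⟩
    | succ i ih =>
      intro hi
      obtain ⟨f, hf, f1, f2, f3⟩ := ih (by omega)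
      rcases h.adj i (by omega) with he | he
      · refine ⟨some true, .out hf ?_ he, by simp, fun _ => ⟨i, rfl, he⟩, by simp⟩
        rcases i with _ | i
        · rcases f with _ | _ | _
          · exact Or.inl rfl
          · obtain ⟨m, hm, _⟩ := f3 rfl; omega
          · obtain ⟨m, hm, _⟩ := f2 rfl; omega
        · exact Or.inr (h.ncoll i (by omega) (fun hh => edge_asymm D he hh.2))
      · refine ⟨some false, .inn hf ?_ he, by simp, by simp, fun _ => ⟨i, rfl, he⟩⟩
        rcases f with _ | _ | _
        · trivial
        · obtain ⟨m, rfl, h3⟩ := f3 rfl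
          exact h.ncoll m (by omega) (fun hh => edge_asymm D hh.1 h3)
        · obtain ⟨m, rfl, h3⟩ := f2 rfl
          exact h.coll m (by omega) h3 he
  obtain ⟨f, hf, -⟩ := this n le_rfl
  exact ⟨f, h.last ▸ hf⟩

theorem dSep_iff_UP (D : Dag V) (x y : V) (S : Set V) :
    D.dSep x y S ↔ ¬ ∃ n g, UP D S x y n g := by
  constructor
  · rintro h ⟨n, g, hU⟩
    obtain ⟨i, hi0, hin, hb⟩ := h ⟨n, fun i => g i, fun i j hij =>
      Fin.ext (hU.inj i j (by omega) (by omega) hij), hU.first, hU.last, fun i => by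
        simpa using hU.adj i i.2⟩
    obtain ⟨i, rfl⟩ : ∃ k, i = k + 1 := ⟨i - 1, by omega⟩
    have hin' : i + 1 < n := hin
    rcases hb with ⟨hc, hs⟩ | ⟨⟨_, _, h1, h2⟩, hs⟩
    · refine hU.ncoll i hin (fun hh => hc ⟨hi0, hin, ?_, ?_⟩) hs
      · simpa using hh.1
      · simpa using hh.2
    · obtain ⟨d, hd, hd'⟩ := hU.coll i hin (by simpa using h1) (by simpa using h2)
      exact hs d hd hd'
  · intro h p
    by_contra hb
    refine h ⟨p.n, fun i => if hi : i < p.n + 1 then p.f ⟨i, hi⟩ else x, ?_, ?_, ?_, ?_, ?_, ?_⟩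
    · intro i j hi hj hij
      rw [dif_pos (by omega), dif_pos (by omega)] at hij
      simpa using p.inj hij
    · rw [dif_pos (by omega)]; exact p.first
    · rw [dif_pos (by omega)]; exact p.last
    · intro i hi
      rw [dif_pos (by omega), dif_pos (by omega)]
      exact p.adj ⟨i, hi⟩
    · intro i hi
      rw [dif_pos (by omega), dif_pos (by omega), dif_pos (by omega)]
      intro h1 h2
      by_contra hA
      refine hb ⟨i + 1, by omega, hi, Or.inr ⟨⟨by omega, hi, h1, h2⟩, ?_⟩⟩
      intro d hd hd'
      exact hA ⟨d, hd, hd'⟩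
    · intro i hi
      rw [dif_pos (by omega), dif_pos (by omega), dif_pos (by omega)]
      intro h1 h2
      refine hb ⟨i + 1, by omega, hi, Or.inl ⟨?_, h2⟩⟩
      rintro ⟨_, _, h3, h4⟩
      exact h1 ⟨h3, h4⟩

theorem dSep_iff (D : Dag V) (x y : V) (S : Set V) :
    D.dSep x y S ↔ ¬ ∃ f, Reach D S x y f := by
  rw [dSep_iff_UP, not_iff_not]
  constructor
  · rintro ⟨n, g, h⟩; exact h.toReach
  · rintro ⟨f, h⟩
    obtain ⟨f', l, h', -⟩ := h.toAP
    obtain ⟨n, g, h'', -⟩ := h'.toUP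
    exact ⟨n, g, h''⟩

end CpAux

namespace CpAux

open Relation

/-! ### Markov equivalence determines skeleton and unshielded colliders -/

theorem dSep_pa (D : Dag V) {a c : V} (hne : a ≠ c) (hadj : ¬ D.Adj a c) (hanc : ¬ D.Anc a c) :
    D.dSep a c (D.Pa a) := by
  rw [dSep_iff]
  rintro ⟨f, h⟩
  have key : ∀ v f, Reach D (D.Pa a) a v f → (v = a ∧ f = none) ∨
      (D.edge v a ∧ f = some false) ∨ (TransGen D.edge a v ∧ f = some true) := by
    intro v f h
    induction h with
    | start => exact Or.inl ⟨rfl, rfl⟩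
    | @out v f w hv ho he ih =>
      rcases ih with ⟨rfl, rfl⟩ | ⟨h1, rfl⟩ | ⟨h1, rfl⟩
      · exact Or.inr (Or.inr ⟨.single he, rfl⟩)
      · rcases ho with h | h
        · cases h
        · exact absurd h1 h
      · exact Or.inr (Or.inr ⟨h1.tail he, rfl⟩)
    | @inn v f w hv ho he ih =>
      rcases ih with ⟨rfl, rfl⟩ | ⟨h1, rfl⟩ | ⟨h1, rfl⟩
      · exact Or.inr (Or.inl ⟨he, rfl⟩)
      · exact absurd h1 ho
      · obtain ⟨d, hd, hda⟩ := ho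
        exact absurd (h1.to_reflTransGen.trans hd) (D.acyclic d a hda)
  rcases key c f h with ⟨rfl, _⟩ | ⟨h1, _⟩ | ⟨h1, _⟩
  · exact hne rfl
  · exact hadj (Or.inr h1)
  · exact hanc h1.to_reflTransGen

theorem dSep_or (D : Dag V) {a c : V} (hne : a ≠ c) (hadj : ¬ D.Adj a c) :
    D.dSep a c (D.Pa a) ∨ D.dSep c a (D.Pa c) := by
  by_cases h : D.Anc a c
  · right
    refine dSep_pa D hne.symm (fun h => hadj h.symm) (fun h' => ?_)
    rcases (ReflTransGen.cases_head h : _) with h | ⟨b, hb, hr⟩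
    · exact hne h
    · exact D.acyclic a b hb (ReflTransGen.trans hr h')
  · exact Or.inl (dSep_pa D hne hadj h)

theorem not_dSep_of_adj (D : Dag V) {a c : V} (hadj : D.Adj a c) (S : Set V) :
    ¬ D.dSep a c S := by
  rw [dSep_iff, not_not]
  rcases hadj with h | h
  · exact ⟨_, .out .start (Or.inl rfl) h⟩
  · exact ⟨_, .inn .start trivial h⟩

theorem adj_of_MEquiv {D D' : Dag V} (h : D.MEquiv D') {a c : V} (ha : D'.Adj a c) :
    D.Adj a c := by
  by_contra hn
  have hne : a ≠ c := by
    rintro rfl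
    rcases ha with h | h <;> exact edge_irrefl D' _ h
  rcases dSep_or D hne hn with h1 | h1
  · exact not_dSep_of_adj D' ha _ ((h _ _ _).1 h1)
  · exact not_dSep_of_adj D' ha.symm _ ((h _ _ _).1 h1)

theorem MEquiv_symm {D D' : Dag V} (h : D.MEquiv D') : D'.MEquiv D :=
  fun x y S => (h x y S).symm

theorem coll_of_sep (D : Dag V) {a b c : V} {S : Set V} (hs : D.dSep a c S) (hb : b ∉ S)
    (h1 : D.Adj a b) (h2 : D.Adj b c) : D.edge a b ∧ D.edge c b := by
  rw [dSep_iff] at hs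
  rcases h1 with h1 | h1
  · refine ⟨h1, ?_⟩
    rcases h2 with h2 | h2
    · exact absurd ⟨_, .out (.out .start (Or.inl rfl) h1) (Or.inr hb) h2⟩ hs
    · exact h2
  · rcases h2 with h2 | h2
    · exact absurd ⟨_, .out (.inn .start trivial h1) (Or.inr hb) h2⟩ hs
    · exact absurd ⟨_, .inn (.inn .start trivial h1) hb h2⟩ hs

theorem VS_of_MEquiv {D D' : Dag V} (h : D.MEquiv D') {a b c : V} (hv : VS D a b c) :
    VS D' a b c := by
  obtain ⟨h1, h2, h3, h4⟩ := hv
  have k1 : D'.Adj a b := adj_of_MEquiv (MEquiv_symm h) (Or.inl h1)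
  have k2 : D'.Adj b c := adj_of_MEquiv (MEquiv_symm h) (Or.inr h2)
  have k3 : ¬ D'.Adj a c := fun hh => h3 (adj_of_MEquiv h hh)
  rcases dSep_or D h4 h3 with hs | hs
  · obtain ⟨e1, e2⟩ := coll_of_sep D' ((h _ _ _).1 hs) (edge_asymm D h1) k1 k2
    exact ⟨e1, e2, k3, h4⟩
  · obtain ⟨e1, e2⟩ := coll_of_sep D' ((h _ _ _).1 hs) (edge_asymm D h2) k2.symm k1.symm
    exact ⟨e2, e1, k3, h4⟩

theorem SameSV_of_MEquiv {D D' : Dag V} (h : D.MEquiv D') : SameSV D D' :=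
  ⟨fun _ _ => ⟨adj_of_MEquiv (MEquiv_symm h), adj_of_MEquiv h⟩,
   fun _ _ _ => ⟨VS_of_MEquiv h, VS_of_MEquiv (MEquiv_symm h)⟩⟩

/-! ### Covered edge reversal -/

structure Cov (D D' : Dag V) (u v : V) : Prop where
  e : D.edge u v
  pa : ∀ z, D.edge z v ↔ z = u ∨ D.edge z u
  flip : ∀ a b, D'.edge a b ↔ (a = v ∧ b = u) ∨ (D.edge a b ∧ ¬ (a = u ∧ b = v))

theorem Cov.symm {D D' : Dag V} {u v : V} (h : Cov D D' u v) : Cov D' D v u := by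
  have huv : u ≠ v := by rintro rfl; exact edge_irrefl D _ h.e
  refine ⟨(h.flip v u).2 (Or.inl ⟨rfl, rfl⟩), fun z => ?_, fun a b => ?_⟩
  · have := h.pa z
    have := edge_irrefl D v
    have := edge_irrefl D u
    have := @edge_asymm _ D u v
    rw [h.flip, h.flip]
    grind
  · have := h.e
    have := edge_asymm D h.e
    rw [h.flip]
    grind

theorem exists_cov (D : Dag V) {u v : V} (he : D.edge u v)
    (hpa : ∀ z, D.edge z v ↔ z = u ∨ D.edge z u) : ∃ D', Cov D D' u v := by
  let E0 : V → V → Prop := fun a b => D.edge a b ∧ ¬ (a = u ∧ b = v)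
  let E : V → V → Prop := fun a b => (a = v ∧ b = u) ∨ E0 a b
  have hsub : ∀ a b, ReflTransGen E0 a b → ReflTransGen D.edge a b := fun a b h =>
    ReflTransGen.mono (p := D.edge) (fun _ _ h => h.1) a b h
  have huv : u ≠ v := by rintro rfl; exact edge_irrefl D _ he
  have hN : ¬ ReflTransGen E0 u v := by
    intro h
    rcases ReflTransGen.cases_tail h with h | ⟨z, hz, hzv⟩
    · exact huv h.symm
    · rcases (hpa z).1 hzv.1 with rfl | hzu
      · exact hzv.2 ⟨rfl, rfl⟩
      · exact D.acyclic z u hzu (hsub _ _ hz)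
  have hE : ∀ a b, ReflTransGen E a b →
      ReflTransGen E0 a b ∨ (ReflTransGen E0 a v ∧ ReflTransGen E0 u b) := by
    intro a b h
    induction h with
    | refl => exact Or.inl .refl
    | tail _ hbc ih =>
      rcases hbc with ⟨rfl, rfl⟩ | hbc
      · rcases ih with ih | ih
        · exact Or.inr ⟨ih, .refl⟩
        · exact Or.inr ⟨ih.1, .refl⟩
      · rcases ih with ih | ih
        · exact Or.inl (ih.tail hbc)
        · exact Or.inr ⟨ih.1, ih.2.tail hbc⟩
  refine ⟨⟨E, ?_⟩, he, hpa, fun a b => Iff.rfl⟩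
  rintro a b (⟨rfl, rfl⟩ | hab) hr
  · rcases hE _ _ hr with h | h
    · exact hN h
    · exact hN h.1
  · rcases hE _ _ hr with h | h
    · exact D.acyclic a b hab.1 (hsub _ _ h)
    · exact hN ((h.2.tail hab).trans h.1)

theorem Cov.ans {D D' : Dag V} {u v : V} (h : Cov D D' u v) {S : Set V} {w : V}
    (hw : AnS D S w) : AnS D' S w ∨ (w = u ∧ AnS D' S v) := by
  obtain ⟨d, hd, hs⟩ := hw
  induction hd using ReflTransGen.head_induction_on with
  | refl => exact Or.inl ⟨d, .refl, hs⟩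
  | @head a c hac _ ih =>
    have lift : ∀ {c}, D'.edge a c → AnS D' S c → AnS D' S a := fun h1 h2 =>
      AnS.of_anc (ReflTransGen.single h1) h2
    rcases ih with ih | ⟨rfl, ih⟩
    · by_cases hh : a = u ∧ c = v
      · exact Or.inr ⟨hh.1, hh.2 ▸ ih⟩
      · exact Or.inl (lift ((h.flip a c).2 (Or.inr ⟨hac, hh⟩)) ih)
    · left
      refine lift ((h.flip a v).2 (Or.inr ⟨(h.pa a).2 (Or.inr hac), ?_⟩)) ih
      rintro ⟨rfl, _⟩
      exact edge_irrefl D _ hac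

/-- the invariant tracked along active walks -/
def Q (D' : Dag V) (S : Set V) (s u v : V) (w : V) (f : Option Bool) : Prop :=
  (w ≠ u → w ≠ v → Reach D' S s w f) ∧
  (w = v → f ≠ some true → Reach D' S s v f) ∧
  (w = v → f = some true → (Reach D' S s v (some true) ∧ Reach D' S s u (some true)) ∨
    (Reach D' S s v (some false) ∧ ∃ g, g ≠ some true ∧ Reach D' S s u g ∧ okout S u g) ∨
    (Reach D' S s u (some true) ∧ ∃ g, g ≠ some true ∧ Reach D' S s v g ∧ okin D' S v g)) ∧
  (w = u → f = none → Reach D' S s u none) ∧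
  (w = u → f = some true → Reach D' S s u (some true) ∧ Reach D' S s v (some true)) ∧
  (w = u → f = some false → (∃ g, g ≠ some true ∧ Reach D' S s u g) ∨
    (Reach D' S s u (some true) ∧ ∃ g, Reach D' S s v g ∧ okin D' S v g))

theorem okin_of_ne {D : Dag V} {S : Set V} {u : V} {g : Option Bool} (hg : g ≠ some true)
    (h : okout S u g) : okin D S u g := by
  rcases g with _ | _ | _
  · trivial
  · simpa [okout, okin] using h
  · exact absurd rfl hg

theorem okout_of_okin {D : Dag V} {S : Set V} {u : V} {g : Option Bool} (hg : g ≠ some true)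
    (h : okin D S u g) : okout S u g := by
  rcases g with _ | _ | _
  · exact Or.inl rfl
  · exact Or.inr h
  · exact absurd rfl hg

theorem Cov.reach {D D' : Dag V} {u v : V} (h : Cov D D' u v) {S : Set V} {s w : V}
    {f : Option Bool} (hr : Reach D S s w f) : Q D' S s u v w f := by
  have huv : u ≠ v := by rintro rfl; exact edge_irrefl D _ h.e
  have hvu : D'.edge v u := (h.flip v u).2 (Or.inl ⟨rfl, rfl⟩)
  have hE : ∀ a b, D.edge a b → a ≠ u → D'.edge a b := fun a b hab ha =>
    (h.flip a b).2 (Or.inr ⟨hab, fun hh => ha hh.1⟩)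
  have hE' : ∀ a b, D.edge a b → b ≠ v → D'.edge a b := fun a b hab hb =>
    (h.flip a b).2 (Or.inr ⟨hab, fun hh => hb hh.2⟩)
  have hPu : ∀ z, D.edge z u → D'.edge z u ∧ D'.edge z v := fun z hz => by
    have : z ≠ u := by rintro rfl; exact edge_irrefl D _ hz
    exact ⟨hE _ _ hz this, hE _ _ ((h.pa z).2 (Or.inr hz)) this⟩
  have hPv : ∀ z, D.edge z v → z ≠ u → D'.edge z u ∧ D'.edge z v := fun z hz hzu =>
    hPu z (((h.pa z).1 hz).resolve_left hzu)
  have hin : ∀ w f, w ≠ u → okin D S w f → okin D' S w f := by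
    intro w f hw ho
    rcases f with _ | _ | _
    · trivial
    · exact ho
    · exact (h.ans ho).resolve_right (fun hh => hw hh.1)
  have mkTT : ∀ z f, Reach D' S s z f → okout S z f → D'.edge z u ∧ D'.edge z v →
      Reach D' S s u (some true) ∧ Reach D' S s v (some true) := fun z f hz ho he =>
    ⟨.out hz ho he.1, .out hz ho he.2⟩
  have Qother : ∀ z f, z ≠ u → z ≠ v → Reach D' S s z f → Q D' S s u v z f := by
    intro z f h1 h2 h3
    exact ⟨fun _ _ => h3, fun h => absurd h h2, fun h => absurd h h2, fun h => absurd h h1,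
      fun h => absurd h h1, fun h => absurd h h1⟩
  have QTT : ∀ z, z = u ∨ z = v → Reach D' S s u (some true) ∧ Reach D' S s v (some true) →
      Q D' S s u v z (some true) := by
    intro z hz h3
    refine ⟨?_, ?_, fun _ _ => Or.inl ⟨h3.2, h3.1⟩, by simp, fun _ _ => h3, by simp⟩
    · intro h1 h2; rcases hz with h | h
      · exact absurd h h1
      · exact absurd h h2
    · intro _ h; exact absurd rfl h
  have QvF : Reach D' S s v (some false) → Q D' S s u v v (some false) := by
    intro h3
    exact ⟨fun _ h => absurd rfl h, fun _ _ => h3, by simp, by simp, by simp,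
      fun h => absurd h.symm huv⟩
  have QvT : ((Reach D' S s v (some false) ∧ ∃ g, g ≠ some true ∧ Reach D' S s u g ∧ okout S u g) ∨
    (Reach D' S s u (some true) ∧ ∃ g, g ≠ some true ∧ Reach D' S s v g ∧ okin D' S v g)) →
      Q D' S s u v v (some true) := by
    intro h3
    exact ⟨fun _ h => absurd rfl h, by simp, fun _ _ => Or.inr h3, by simp,
      fun h => absurd h.symm huv, by simp⟩
  have QuF : ((∃ g, g ≠ some true ∧ Reach D' S s u g) ∨
    (Reach D' S s u (some true) ∧ ∃ g, Reach D' S s v g ∧ okin D' S v g)) →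
      Q D' S s u v u (some false) := by
    intro h3
    exact ⟨fun h => absurd rfl h, fun h => absurd h huv, fun h => absurd h huv, by simp, by simp,
      fun _ _ => h3⟩
  have Qf : ∀ z, Reach D' S s z (some false) → Q D' S s u v z (some false) := by
    intro z hz
    by_cases h1 : z = u
    · subst h1; exact QuF (Or.inl ⟨_, by simp, hz⟩)
    by_cases h2 : z = v
    · subst h2; exact QvF hz
    exact Qother z _ h1 h2 hz
  induction hr with
  | start =>
    refine ⟨fun _ _ => .start, ?_, by simp, ?_, by simp, by simp⟩
    · rintro rfl _; exact .start
    · rintro rfl _; exact .start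
  | @out w f z hw ho he ih =>
    obtain ⟨q1, q2, q3, q4, q5, q6⟩ := ih
    by_cases hwu : w = u
    · subst hwu
      have hzu : z ≠ w := by rintro rfl; exact edge_irrefl D _ he
      by_cases hzv : z = v
      · subst hzv
        rcases f with _ | _ | _
        · have := q4 rfl rfl
          exact QvT (Or.inl ⟨.inn this trivial hvu, none, by simp, this, Or.inl rfl⟩)
        · have hwS : w ∉ S := by simpa [okout] using ho
          rcases q6 rfl rfl with ⟨g, hg, hr⟩ | ⟨hr, g, hg, hgo⟩
          · exact QvT (Or.inl ⟨.inn hr (okin_of_ne hg (Or.inr hwS)) hvu, g, hg, hr, Or.inr hwS⟩)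
          · by_cases hgt : g = some true
            · subst hgt
              exact QTT _ (Or.inr rfl) ⟨hr, hg⟩
            · exact QvT (Or.inr ⟨hr, g, hgt, hg, hgo⟩)
        · exact QTT _ (Or.inr rfl) (q5 rfl rfl)
      · refine Qother z _ hzu hzv ?_
        have he' := hE' _ _ he hzv
        rcases f with _ | _ | _
        · exact .out (q4 rfl rfl) ho he'
        · have hwS : w ∉ S := by simpa [okout] using ho
          rcases q6 rfl rfl with ⟨g, hg, hr⟩ | ⟨hr, g, hg, hgo⟩
          · exact .out hr (Or.inr hwS) he'
          · exact .out hr (Or.inr hwS) he'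
        · exact .out (q5 rfl rfl).1 ho he'
    · have he' := hE _ _ he hwu
      by_cases hwv : w = v
      · subst hwv
        have hzv : z ≠ w := by rintro rfl; exact edge_irrefl D _ he
        have hzu : z ≠ u := by rintro rfl; exact edge_asymm D he h.e
        refine Qother z _ hzu hzv ?_
        by_cases hf : f = some true
        · subst hf
          have hwS : w ∉ S := by simpa [okout] using ho
          rcases q3 rfl rfl with h1 | h1 | ⟨_, g, _, h1, _⟩
          · exact .out h1.1 ho he'
          · exact .out h1.1 (Or.inr hwS) he'
          · exact .out h1 (Or.inr hwS) he'
        · exact .out (q2 rfl hf) ho he'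
      · have hr := q1 hwu hwv
        by_cases hzu : z = u
        · subst hzu
          exact QTT _ (Or.inl rfl) (mkTT _ _ hr ho (hPu _ he))
        by_cases hzv : z = v
        · subst hzv
          exact QTT _ (Or.inr rfl) (mkTT _ _ hr ho (hPv _ he hwu))
        exact Qother z _ hzu hzv (.out hr ho he')
  | @inn w f z hw ho he ih =>
    obtain ⟨q1, q2, q3, q4, q5, q6⟩ := ih
    by_cases hwu : w = u
    · subst hwu
      obtain ⟨e1, e2⟩ := hPu z he
      apply Qf
      rcases f with _ | _ | _
      · exact .inn (q4 rfl rfl) trivial e1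
      · rcases q6 rfl rfl with ⟨g, hg, hr⟩ | ⟨hr, g, hg, hgo⟩
        · exact .inn hr (okin_of_ne hg (Or.inr ho)) e1
        · exact .inn hg hgo e2
      · obtain ⟨r1, r2⟩ := q5 rfl rfl
        rcases h.ans ho with h1 | ⟨_, h1⟩
        · exact .inn r1 h1 e1
        · exact .inn r2 h1 e2
    · have ho' := hin w f hwu ho
      by_cases hwv : w = v
      · subst hwv
        by_cases hzu : z = u
        · subst hzu
          apply QuF
          by_cases hf : f = some true
          · subst hf
            rcases q3 rfl rfl with h1 | ⟨_, g, hg, h1, _⟩ | ⟨h1, g, _, h2, h3⟩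
            · exact Or.inr ⟨h1.2, _, h1.1, ho'⟩
            · exact Or.inl ⟨g, hg, h1⟩
            · exact Or.inr ⟨h1, g, h2, h3⟩
          · have := q2 rfl hf
            exact Or.inr ⟨.out this (okout_of_okin hf ho') hvu, f, this, ho'⟩
        · obtain ⟨e1, e2⟩ := hPv z he hzu
          apply Qf
          by_cases hf : f = some true
          · subst hf
            rcases q3 rfl rfl with h1 | ⟨_, g, hg, h1, h2⟩ | ⟨h1, g, _, h2, h3⟩
            · exact .inn h1.1 ho' e2
            · exact .inn h1 (okin_of_ne hg h2) e1
            · exact .inn h2 h3 e2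
          · exact .inn (q2 rfl hf) ho' e2
      · exact Qf z (.inn (q1 hwu hwv) ho' (hE' _ _ he hwv))

theorem Cov.reach' {D D' : Dag V} {u v : V} (h : Cov D D' u v) {S : Set V} {s w : V}
    (hr : ∃ f, Reach D S s w f) : ∃ f, Reach D' S s w f := by
  obtain ⟨f, hr⟩ := hr
  obtain ⟨q1, q2, q3, q4, q5, q6⟩ := h.reach hr
  by_cases hwu : w = u
  · subst hwu
    rcases f with _ | _ | _
    · exact ⟨_, q4 rfl rfl⟩
    · rcases q6 rfl rfl with ⟨g, _, h⟩ | ⟨h, _⟩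
      · exact ⟨_, h⟩
      · exact ⟨_, h⟩
    · exact ⟨_, (q5 rfl rfl).1⟩
  by_cases hwv : w = v
  · subst hwv
    by_cases hf : f = some true
    · rcases q3 rfl hf with h1 | h1 | ⟨_, g, _, h1, _⟩
      · exact ⟨_, h1.1⟩
      · exact ⟨_, h1.1⟩
      · exact ⟨_, h1⟩
    · exact ⟨_, q2 rfl hf⟩
  exact ⟨_, q1 hwu hwv⟩

theorem Cov.mequiv {D D' : Dag V} {u v : V} (h : Cov D D' u v) : D.MEquiv D' := by
  intro x y S
  rw [dSep_iff, dSep_iff, not_iff_not]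
  exact ⟨h.reach', h.symm.reach'⟩

/-! ### Same skeleton and unshielded colliders implies Markov equivalence -/

theorem exists_covered [Finite V] {D D' : Dag V} (h : SameSV D D')
    (hd : ∃ a b, D.edge a b ∧ D'.edge b a) :
    ∃ u v, D.edge u v ∧ D'.edge v u ∧ ∀ z, D.edge z v ↔ z = u ∨ D.edge z u := by
  obtain ⟨y, ⟨x0, hy1, hy2⟩, hymin⟩ := (wf_edge D).has_min {y | ∃ x, D.edge x y ∧ D'.edge y x}
    (by obtain ⟨a, b, h⟩ := hd; exact ⟨b, a, h⟩)
  obtain ⟨x, ⟨hx1, hx2⟩, hxmax⟩ := (wf_edge_flip D).has_min {x | D.edge x y ∧ D'.edge y x}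
    ⟨x0, hy1, hy2⟩
  have hmin : ∀ b, D.edge b y → ∀ a, D.edge a b → D'.edge a b := by
    intro b hb a hab
    rcases (h.1 a b).1 (Or.inl hab) with h1 | h1
    · exact h1
    · exact absurd (TransGen.single hb) (hymin b ⟨a, hab, h1⟩)
  refine ⟨x, y, hx1, hx2, fun z => ⟨fun hz => ?_, ?_⟩⟩
  · by_cases hzx : z = x
    · exact Or.inl hzx
    right
    have hadj : D.Adj z x := by
      by_contra hn
      have := (h.2 z y x).1 ⟨hz, hx1, hn, hzx⟩
      exact edge_asymm D' hx2 this.2.1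
    rcases hadj with h1 | h1
    · exact h1
    · exfalso
      have e1 := hmin z hz x h1
      rcases (h.1 z y).1 (Or.inl hz) with h2 | h2
      · exact edge_tri D' e1 h2 hx2
      · exact hxmax z ⟨hz, h2⟩ (TransGen.single h1)
  · rintro (rfl | hz)
    · exact hx1
    · have e1 := hmin x hx1 z hz
      have hzy : z ≠ y := by rintro rfl; exact edge_asymm D hx1 hz
      have hadj : D.Adj z y := by
        by_contra hn
        have := (h.2 z x y).2 ⟨e1, hx2, fun hh => hn ((h.1 _ _).2 hh), hzy⟩
        exact edge_asymm D hx1 this.2.1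
      rcases hadj with h1 | h1
      · exact h1
      · exact absurd h1 (edge_tri D hz hx1)

theorem MEquiv_of_SameSV [Finite V] {D D' : Dag V} (h : SameSV D D') : D.MEquiv D' := by
  have main : ∀ (n : ℕ) (D : Dag V), SameSV D D' →
      {p : V × V | D.edge p.1 p.2 ∧ D'.edge p.2 p.1}.ncard = n → D.MEquiv D' := by
    intro n
    induction n using Nat.strong_induction_on with
    | _ n ih =>
      intro D h hn
      by_cases hd : ∃ a b, D.edge a b ∧ D'.edge b a
      · obtain ⟨u, v, h1, h2, h3⟩ := exists_covered h hd
        obtain ⟨D1, hc⟩ := exists_cov D h1 h3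
        have hm := hc.mequiv
        have hlt : {p : V × V | D1.edge p.1 p.2 ∧ D'.edge p.2 p.1}.ncard < n := by
          rw [← hn]
          apply Set.ncard_lt_ncard _ (Set.toFinite _)
          constructor
          · rintro ⟨a, b⟩ ⟨k1, k2⟩
            rcases (hc.flip a b).1 k1 with ⟨rfl, rfl⟩ | k
            · exact absurd k2 (edge_asymm D' h2)
            · exact ⟨k.1, k2⟩
          · intro hs
            have := hs (show (u, v) ∈ {p : V × V | D.edge p.1 p.2 ∧ D'.edge p.2 p.1} from ⟨h1, h2⟩)
            exact edge_asymm D1 this.1 ((hc.flip v u).2 (Or.inl ⟨rfl, rfl⟩))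
        have := ih _ hlt D1 ((SameSV_of_MEquiv hm).symm.trans h) rfl
        exact fun x y S => (hm x y S).trans (this x y S)
      · have : D.edge = D'.edge := by
          funext a b
          apply propext
          constructor
          · intro hab
            rcases (h.1 a b).1 (Or.inl hab) with k | k
            · exact k
            · exact absurd ⟨a, b, hab, k⟩ hd
          · intro hab
            rcases (h.1 a b).2 (Or.inl hab) with k | k
            · exact k
            · exact absurd ⟨b, a, k, hab⟩ hd
        have : D = D' := by cases D; cases D'; simpa using this
        subst this
        exact fun _ _ _ => Iff.rfl
  exact main _ D h rfl

end CpAux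

namespace CpAux

open Relation

/-! ### Closure under the orientation rules -/

inductive Comp (D : Dag V) : V → V → Prop
  | vs {a b c} : VS D a b c → Comp D a b
  | r1 {a b c} : Comp D a b → D.Adj b c → ¬ D.Adj a c → a ≠ c → ¬ VS D a b c → Comp D b c
  | r2 {a b c} : Comp D a b → Comp D b c → D.Adj a c → Comp D a c
  | r3 {a b c d} : D.Adj a b → D.Adj a c → D.Adj a d → ¬ VS D c a d → Comp D c b → Comp D d b →
      ¬ D.Adj c d → c ≠ d → Comp D a b

theorem VS.symm {D : Dag V} {a b c : V} (h : VS D a b c) : VS D c b a :=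
  ⟨h.2.1, h.1, fun hh => h.2.2.1 hh.symm, h.2.2.2.symm⟩

theorem Comp.sound {D D' : Dag V} (h : SameSV D D') {a b : V} (hc : Comp D a b) :
    D'.edge a b := by
  induction hc with
  | vs hv => exact ((h.2 _ _ _).1 hv).1
  | @r1 a b c hab hbc hac hne hv ih =>
    rcases (h.1 b c).1 hbc with h1 | h1
    · exact h1
    · exact absurd ((h.2 a b c).2 ⟨ih, h1, fun hh => hac ((h.1 _ _).2 hh), hne⟩) hv
  | r2 _ _ hac ih1 ih2 =>
    rcases (h.1 _ _).1 hac with h1 | h1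
    · exact h1
    · exact absurd h1 (edge_tri D' ih1 ih2)
  | @r3 a b c d hab hac had hv _ _ hcd hne ih1 ih2 =>
    rcases (h.1 a b).1 hab with h1 | h1
    · exact h1
    · have e1 : D'.edge c a := by
        rcases (h.1 a c).1 hac with k | k
        · exact absurd k (edge_tri D' ih1 h1)
        · exact k
      have e2 : D'.edge d a := by
        rcases (h.1 a d).1 had with k | k
        · exact absurd k (edge_tri D' ih2 h1)
        · exact k
      exact absurd ((h.2 c a d).2 ⟨e1, e2, fun hh => hcd ((h.1 _ _).2 hh), hne⟩) hv

theorem Comp.edge {D : Dag V} {a b : V} (hc : Comp D a b) : D.edge a b :=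
  hc.sound (D' := D) ⟨fun _ _ => Iff.rfl, fun _ _ _ => Iff.rfl⟩

/-- edges left unoriented -/
def U (D : Dag V) (a b : V) : Prop := D.Adj a b ∧ ¬ Comp D a b ∧ ¬ Comp D b a

theorem U.symm {D : Dag V} {a b : V} (h : U D a b) : U D b a := ⟨h.1.symm, h.2.2, h.2.1⟩

theorem U.not_vs {D : Dag V} {a b c : V} (h : U D b c) : ¬ VS D a b c :=
  fun hv => h.2.2 (.vs hv.symm)

theorem adj_ne {D : Dag V} {a b : V} (h : D.Adj a b) : a ≠ b := by
  rintro rfl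
  rcases h with h | h <;> exact edge_irrefl D _ h

theorem comp_adj {D : Dag V} {a b c : V} (h : Comp D a b) (hu : U D b c) : D.Adj a c := by
  by_contra hn
  have hne : a ≠ c := by rintro rfl; exact hu.2.2 h
  exact hu.2.1 (.r1 h hu.1 hn hne hu.not_vs)

theorem comp_U [Finite V] {D : Dag V} : ∀ (b a c : V), Comp D a b → U D b c → Comp D a c := by
  intro b
  induction b using (wf_edge D).induction with
  | _ b ih =>
  have ih' : ∀ b', Comp D b' b → ∀ a c, Comp D a b' → U D b' c → Comp D a c :=
    fun b' hb' => ih b' (TransGen.single hb'.edge)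
  intro a c hab hbc
  by_contra hac
  have notc : ∀ d, Comp D d b → ¬ Comp D c d := fun d hd hcd =>
    hbc.2.2 (.r2 hcd hd hbc.1.symm)
  have Uac : U D a c := ⟨comp_adj hab hbc, hac, notc a hab⟩
  have cases_d : ∀ d, Comp D d b → Comp D d c ∨ U D d c := by
    intro d hd
    by_cases h : Comp D d c
    · exact Or.inl h
    · exact Or.inr ⟨comp_adj hd hbc, h, notc d hd⟩
  have both : ∀ d e, Comp D d b → Comp D e b → ¬ D.Adj d e → d ≠ e → U D d c → U D e c → False :=
    fun d e hd he hde hne h1 h2 =>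
      hbc.2.2 (.r3 hbc.1.symm h1.1.symm h2.1.symm h2.symm.not_vs hd he hde hne)
  have mixed : ∀ d e, ¬ D.Adj d e → d ≠ e → Comp D d c → U D e c → False :=
    fun d e hde hne h1 h2 => hde (comp_adj h1 h2.symm)
  cases hab with
  | @vs _ _ d hv =>
    have hd : Comp D d b := .vs hv.symm
    have hda : ¬ D.Adj d a := fun h => hv.2.2.1 h.symm
    rcases cases_d d hd with h | h
    · exact mixed d a hda hv.2.2.2.symm h Uac
    · exact both d a hd (.vs hv) hda hv.2.2.2.symm h Uac
  | @r1 d _ _ hda hadj hn hne hv =>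
    have hab : Comp D a b := .r1 hda hadj hn hne hv
    have hdc := ih' a hab d c hda Uac
    exact hn (comp_adj hdc hbc.symm)
  | @r2 _ d _ had hdb hadj =>
    rcases cases_d d hdb with h | h
    · exact hac (.r2 had h Uac.1)
    · exact hac (ih' d hdb a c had h)
  | @r3 _ _ d e h1 h2 h3 hv hd he hde hne =>
    have hed : ¬ D.Adj e d := fun h => hde h.symm
    rcases cases_d d hd with k1 | k1 <;> rcases cases_d e he with k2 | k2
    · exact hac (.r3 Uac.1 h2 h3 hv k1 k2 hde hne)
    · exact mixed d e hde hne k1 k2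
    · exact mixed e d hed hne.symm k2 k1
    · exact both d e hd he hde hne k1 k2

/-! ### Perfect orderings -/

def Perf (R : V → V → Prop) : List V → Prop
  | [] => True
  | a :: l => (∀ b ∈ l, ∀ c ∈ l, R a b → R a c → b ≠ c → R b c) ∧ Perf R l

def Clq (R : V → V → Prop) (K : List V) : Prop := ∀ b ∈ K, ∀ c ∈ K, b ≠ c → R b c

theorem Clq.perf {R : V → V → Prop} : ∀ {K : List V}, Clq R K → Perf R K
  | [], _ => trivial
  | _ :: _, h => ⟨fun b hb c hc _ _ hne => h b (List.mem_cons_of_mem _ hb) c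
      (List.mem_cons_of_mem _ hc) hne, Clq.perf (fun b hb c hc => h b (List.mem_cons_of_mem _ hb) c
      (List.mem_cons_of_mem _ hc))⟩

theorem perf_insert {R : V → V → Prop} {t : V} {Q Q' : List V}
    (hQ' : Perf R Q') (hm : ∀ b ∈ Q', b = t ∨ b ∈ Q) : ∀ {l : List V}, (∀ a ∈ l, ¬ R a t) →
      Perf R (l ++ Q) → Perf R (l ++ Q')
  | [], _, _ => hQ'
  | a :: l, hl, h => by
    refine ⟨fun b hb c hc hab hac hne => ?_, perf_insert hQ' hm
      (fun x hx => hl x (List.mem_cons_of_mem _ hx)) h.2⟩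
    have hat := hl a List.mem_cons_self
    have aux : ∀ b ∈ l ++ Q', R a b → b ∈ l ++ Q := by
      intro b hb hab
      rcases List.mem_append.1 hb with h | h
      · exact List.mem_append_left _ h
      · rcases hm b h with rfl | h
        · exact absurd hab hat
        · exact List.mem_append_right _ h
    exact h.1 b (aux b hb hab) c (aux c hc hac) hab hac hne

theorem perf_prefix {R : V → V → Prop} (hs : ∀ a b, R a b → R b a) :
    ∀ (l : List V), l.Nodup → Perf R l → ∀ K : List V, K.Nodup → Clq R K → (∀ k ∈ K, k ∈ l) →
      ∃ l', Perf R (l' ++ K) ∧ (l' ++ K).Perm l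
  | [], _, _, K, _, _, hsub => by
    obtain rfl : K = [] := List.eq_nil_iff_forall_not_mem.2 (fun k hk => by simpa using hsub k hk)
    exact ⟨[], trivial, by simp⟩
  | t :: l0, hnd, hp, K, hKn, hK, hsub => by
    classical
    obtain ⟨hN, hp0⟩ := hp
    obtain ⟨htl, hnd0⟩ := List.nodup_cons.1 hnd
    by_cases ht : t ∈ K
    · obtain ⟨K1, K2, rfl⟩ := List.append_of_mem ht
      have hKn' : (t :: (K1 ++ K2)).Nodup := (List.perm_middle.nodup_iff).1 hKn
      obtain ⟨ht12, hn12⟩ := List.nodup_cons.1 hKn'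
      have hmem12 : ∀ k ∈ K1 ++ K2, k ∈ K1 ++ t :: K2 ∧ k ≠ t := by
        intro k hk
        refine ⟨?_, fun h => ht12 (h ▸ hk)⟩
        simp only [List.mem_append, List.mem_cons] at hk ⊢
        tauto
      have hsub12 : ∀ k ∈ K1 ++ K2, k ∈ l0 ∧ R t k := by
        intro k hk
        obtain ⟨h1, h2⟩ := hmem12 k hk
        exact ⟨(List.mem_cons.1 (hsub k h1)).resolve_left h2, hK t ht k h1 h2.symm⟩
      let M := l0.filter (fun a => decide (R t a ∧ a ∉ K1 ++ K2))
      have hM : ∀ a, a ∈ M ↔ a ∈ l0 ∧ R t a ∧ a ∉ K1 ++ K2 := by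
        intro a; simp [M]
      have hall : ∀ k ∈ M ++ (K1 ++ K2), k ∈ l0 ∧ R t k := by
        intro k hk
        rcases List.mem_append.1 hk with h | h
        · exact ⟨((hM k).1 h).1, ((hM k).1 h).2.1⟩
        · exact hsub12 k h
      have hcl : Clq R (M ++ (K1 ++ K2)) := fun b hb c hc hne =>
        hN b (hall b hb).1 c (hall c hc).1 (hall b hb).2 (hall c hc).2 hne
      have hMn : (M ++ (K1 ++ K2)).Nodup := by
        refine List.nodup_append.2 ⟨hnd0.filter _, hn12, ?_⟩
        rintro a ha b hb rfl
        exact ((hM a).1 ha).2.2 hb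
      obtain ⟨l', h1, h2⟩ := perf_prefix hs l0 hnd0 hp0 _ hMn hcl (fun k hk => (hall k hk).1)
      have hcl' : Clq R (M ++ (K1 ++ t :: K2)) := by
        have hsplit : ∀ b ∈ M ++ (K1 ++ t :: K2), b = t ∨ b ∈ M ++ (K1 ++ K2) := by
          intro b hb
          simp only [List.mem_append, List.mem_cons] at hb ⊢
          tauto
        intro b hb c hc hne
        rcases hsplit b hb with rfl | hb <;> rcases hsplit c hc with rfl | hc
        · exact absurd rfl hne
        · exact (hall c hc).2
        · exact hs _ _ (hall b hb).2
        · exact hcl b hb c hc hne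
      refine ⟨l' ++ M, ?_, ?_⟩
      · rw [List.append_assoc]
        refine perf_insert (t := t) (Q := M ++ (K1 ++ K2)) hcl'.perf ?_ ?_ h1
        · intro b hb
          simp only [List.mem_append, List.mem_cons] at hb ⊢
          tauto
        · intro a ha hat
          have hnd' : (l' ++ (M ++ (K1 ++ K2))).Nodup := h2.nodup_iff.2 hnd0
          have hal : a ∈ l0 := h2.subset (List.mem_append_left _ ha)
          have : a ∈ M ++ (K1 ++ K2) := by
            by_cases hk : a ∈ K1 ++ K2
            · exact List.mem_append_right _ hk
            · exact List.mem_append_left _ ((hM a).2 ⟨hal, hs _ _ hat, hk⟩)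
          exact (List.nodup_append.1 hnd').2.2 a ha a this rfl
      · refine List.Perm.trans ?_ (List.Perm.cons t h2)
        have e1 : l' ++ M ++ (K1 ++ t :: K2) = (l' ++ M ++ K1) ++ t :: K2 := by simp
        have e2 : l' ++ (M ++ (K1 ++ K2)) = (l' ++ M ++ K1) ++ K2 := by simp
        rw [e1, e2]
        exact List.perm_middle
    · obtain ⟨l', h1, h2⟩ := perf_prefix hs l0 hnd0 hp0 K hKn hK (fun k hk =>
        (List.mem_cons.1 (hsub k hk)).resolve_left (fun h => ht (h ▸ hk)))
      refine ⟨t :: l', ⟨fun b hb c hc => hN b (h2.subset hb) c (h2.subset hc), h1⟩, h2.cons t⟩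

theorem perf_rank [DecidableEq V] {R : V → V → Prop} : ∀ {l : List V}, Perf R l →
    ∀ a b c, b ∈ l → c ∈ l → l.idxOf a < l.idxOf b → l.idxOf a < l.idxOf c →
      R a b → R a c → b ≠ c → R b c
  | [], _, _, _, _, hb, _, _, _, _, _, _ => by simp at hb
  | t :: l, h, a, b, c, hb, hc, h1, h2, h3, h4, hne => by
    have hbt : b ≠ t := by rintro rfl; simp at h1
    have hct : c ≠ t := by rintro rfl; simp at h2
    have hb' := (List.mem_cons.1 hb).resolve_left hbt
    have hc' := (List.mem_cons.1 hc).resolve_left hct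
    by_cases hat : a = t
    · subst hat
      exact h.1 b hb' c hc' h3 h4 hne
    · rw [List.idxOf_cons_ne _ (Ne.symm hat), List.idxOf_cons_ne _ (Ne.symm hbt)] at h1
      rw [List.idxOf_cons_ne _ (Ne.symm hat), List.idxOf_cons_ne _ (Ne.symm hct)] at h2
      exact perf_rank h.2 a b c hb' hc' (by omega) (by omega) h3 h4 hne

theorem U_parents [Finite V] {D : Dag V} {t b c : V} (hb : U D t b) (hc : U D t c)
    (hb' : D.edge b t) (hc' : D.edge c t) (hne : b ≠ c) : U D b c := by
  refine ⟨?_, ?_, ?_⟩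
  · by_contra hn
    exact hb.2.2 (.vs ⟨hb', hc', hn, hne⟩)
  · intro h
    exact hb.2.2 (comp_U _ _ _ h hc.symm)
  · intro h
    exact hc.2.2 (comp_U _ _ _ h hb.symm)

theorem exists_perf [Finite V] (D : Dag V) : ∀ (n : ℕ) (W : Finset V), W.card = n →
    ∃ l : List V, l.Nodup ∧ (∀ a, a ∈ l ↔ a ∈ W) ∧ Perf (U D) l := by
  classical
  intro n
  induction n with
  | zero =>
    intro W hW
    refine ⟨[], by simp, ?_, trivial⟩
    rw [Finset.card_eq_zero.1 hW]; simp
  | succ n ih =>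
    intro W hW
    obtain ⟨t, htW, htmin⟩ := (wf_edge_flip D).has_min (W : Set V) (by
      rw [Finset.coe_nonempty, ← Finset.card_pos]; omega)
    have htW' : t ∈ W := htW
    obtain ⟨l, h1, h2, h3⟩ := ih (W.erase t) (by rw [Finset.card_erase_of_mem htW']; omega)
    have hpar : ∀ b ∈ l, U D t b → D.edge b t := by
      intro b hb hu
      rcases hu.1 with h | h
      · exact absurd (TransGen.single h) (htmin b (Finset.mem_of_mem_erase ((h2 b).1 hb)))
      · exact h
    refine ⟨t :: l, List.nodup_cons.2 ⟨fun h => by simpa using (h2 t).1 h, h1⟩, ?_, ?_, h3⟩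
    · intro a
      rw [List.mem_cons, h2, Finset.mem_erase]
      constructor
      · rintro (rfl | h)
        · exact htW'
        · exact h.2
      · intro h
        by_cases hat : a = t
        · exact Or.inl hat
        · exact Or.inr ⟨hat, h⟩
    · intro b hb c hc hub huc hne
      exact U_parents hub huc (hpar b hb hub) (hpar c hc huc) hne

theorem exists_rank [Finite V] (D : Dag V) (v : V) : ∃ r : V → ℕ, Function.Injective r ∧
    (∀ w, w ≠ v → r v < r w) ∧
    (∀ a b c, U D a b → U D a c → r b < r a → r c < r a → b ≠ c → U D b c) := by
  classical
  have := Fintype.ofFinite V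
  obtain ⟨l, h1, h2, h3⟩ := exists_perf D _ (Finset.univ : Finset V) rfl
  obtain ⟨l', h4, h5⟩ := perf_prefix (fun a b h => U.symm h) l h1 h3 [v] (by simp)
    (by intro b hb c hc hne; simp at hb hc; exact absurd (hb.trans hc.symm) hne)
    (by intro k _; exact (h2 k).2 (Finset.mem_univ k))
  have hmem : ∀ a, a ∈ l' ++ [v] := fun a => h5.symm.subset ((h2 a).2 (Finset.mem_univ a))
  have hnd : (l' ++ [v]).Nodup := h5.nodup_iff.2 h1
  have hv : v ∉ l' := fun h => (List.nodup_append.1 hnd).2.2 v h v (by simp) rfl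
  have hlt : ∀ a, (l' ++ [v]).idxOf a < (l' ++ [v]).length := fun a =>
    List.idxOf_lt_length_iff.2 (hmem a)
  have hinj : ∀ a b, (l' ++ [v]).idxOf a = (l' ++ [v]).idxOf b → a = b := fun a b h =>
    (List.idxOf_inj (hmem a)).1 h
  refine ⟨fun a => (l' ++ [v]).length - (l' ++ [v]).idxOf a, ?_, ?_, ?_⟩
  · intro a b hab
    apply hinj
    have := hlt a; have := hlt b
    simp only at hab
    omega
  · intro w hw
    have e1 : (l' ++ [v]).idxOf v = l'.length := by
      rw [List.idxOf_append_of_notMem hv]; simp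
    have := hlt w
    have hne : (l' ++ [v]).idxOf w ≠ (l' ++ [v]).idxOf v := fun h => hw (hinj _ _ h)
    have : (l' ++ [v]).length = l'.length + 1 := by simp
    simp only
    omega
  · intro a b c hab hac hb hc hne
    have := hlt a; have := hlt b; have := hlt c
    simp only at hb hc
    exact perf_rank h4 a b c (hmem b) (hmem c) (by omega) (by omega) hab hac hne

/-! ### Completeness of the orientation rules -/

theorem exists_reversed [Finite V] {D : Dag V} {u v : V} (huv : U D u v) :
    ∃ D' : Dag V, SameSV D D' ∧ D'.edge v u := by
  obtain ⟨r, hinj, hv, hr⟩ := exists_rank D v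
  let F : V → V → Prop := fun a b => U D a b ∧ r a < r b
  let E : V → V → Prop := fun a b => Comp D a b ∨ F a b
  have hFr : ∀ a b, ReflTransGen F a b → r a ≤ r b := by
    intro a b h
    induction h with
    | refl => exact le_rfl
    | tail _ h ih => exact ih.trans h.2.le
  have hCD : ∀ a b, TransGen (Comp D) a b → TransGen D.edge a b := fun a b h =>
    TransGen.mono (p := D.edge) (fun _ _ h => Comp.edge h) a b h
  have hCirr : ∀ a, ¬ TransGen (Comp D) a a := by
    intro a h
    rcases TransGen.head'_iff.1 (hCD a a h) with ⟨b, hb, hr⟩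
    exact D.acyclic a b hb hr
  have hCF : ∀ a b c, TransGen (Comp D) a b → ReflTransGen F b c → TransGen (Comp D) a c := by
    intro a b c h h'
    induction h' with
    | refl => exact h
    | tail _ hf ih =>
      rcases TransGen.tail'_iff.1 ih with ⟨d, hd, hde⟩
      exact TransGen.tail'_iff.2 ⟨d, hd, comp_U _ _ _ hde hf.1⟩
  have hE : ∀ a b, ReflTransGen E a b →
      ReflTransGen F a b ∨ ∃ c, ReflTransGen F a c ∧ TransGen (Comp D) c b := by
    intro a b h
    induction h with
    | refl => exact Or.inl .refl
    | tail _ he ih =>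
      rcases he with he | he
      · rcases ih with ih | ⟨c, h1, h2⟩
        · exact Or.inr ⟨_, ih, .single he⟩
        · exact Or.inr ⟨c, h1, h2.tail he⟩
      · rcases ih with ih | ⟨c, h1, h2⟩
        · exact Or.inl (ih.tail he)
        · exact Or.inr ⟨c, h1, hCF _ _ _ h2 (.single he)⟩
  let D' : Dag V := ⟨E, by
    rintro a b (hab | hab) hba
    · rcases hE _ _ hba with h | ⟨c, h1, h2⟩
      · exact hCirr a (hCF _ _ _ (.single hab) h)
      · exact hCirr c (hCF _ _ _ (h2.tail hab) h1)
    · rcases hE _ _ hba with h | ⟨c, h1, h2⟩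
      · have := hFr _ _ h
        have := hab.2
        omega
      · exact hCirr c (hCF _ _ _ h2 (ReflTransGen.head hab h1))⟩
  have hadj : ∀ a b, D.Adj a b ↔ D'.Adj a b := by
    intro a b
    constructor
    · intro h
      by_cases h1 : Comp D a b
      · exact Or.inl (Or.inl h1)
      by_cases h2 : Comp D b a
      · exact Or.inr (Or.inl h2)
      have hu : U D a b := ⟨h, h1, h2⟩
      rcases Nat.lt_trichotomy (r a) (r b) with h | h | h
      · exact Or.inl (Or.inr ⟨hu, h⟩)
      · exact absurd (hinj h) (adj_ne hu.1)
      · exact Or.inr (Or.inr ⟨hu.symm, h⟩)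
    · rintro ((h | h) | (h | h))
      · exact Or.inl h.edge
      · exact h.1.1
      · exact Or.inr h.edge
      · exact h.1.1.symm
  refine ⟨D', ⟨hadj, fun a b c => ⟨?_, ?_⟩⟩, Or.inr ⟨huv.symm, hv u (adj_ne huv.1)⟩⟩
  · intro h
    exact ⟨Or.inl (.vs h), Or.inl (.vs h.symm), fun hh => h.2.2.1 ((hadj _ _).2 hh), h.2.2.2⟩
  · rintro ⟨h1, h2, h3, h4⟩
    have h3' : ¬ D.Adj a c := fun hh => h3 ((hadj _ _).1 hh)
    rcases h1 with h1 | h1 <;> rcases h2 with h2 | h2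
    · exact ⟨h1.edge, h2.edge, h3', h4⟩
    · exact absurd (comp_adj h1 h2.1.symm) h3'
    · exact absurd (comp_adj h2 h1.1.symm).symm h3'
    · exact absurd (hr b a c h1.1.symm h2.1.symm h1.2 h2.2 h4).1 h3'

theorem cpDir_iff [Finite V] (D : Dag V) (a b : V) : D.CpDir a b ↔ Comp D a b := by
  constructor
  · intro h
    have hab : D.edge a b := h D (fun _ _ _ => Iff.rfl)
    by_contra hn
    have hu : U D a b := ⟨Or.inl hab, hn, fun h => edge_asymm D hab h.edge⟩
    obtain ⟨D', h1, h2⟩ := exists_reversed hu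
    exact edge_asymm D' h2 (h D' (MEquiv_of_SameSV h1))
  · intro h D' hD'
    exact h.sound (SameSV_of_MEquiv hD')

theorem triangle [Finite V] (D : Dag V) {a b c : V} (hab : D.Adj a b) (hbc : D.Adj b c)
    (h1 : ¬ D.CpDir b a) (h2 : ¬ D.CpDir c b) : ¬ D.CpDir c a := by
  rw [cpDir_iff] at *
  intro h
  by_cases hc : Comp D a b
  · exact h2 (.r2 h hc hbc.symm)
  · exact h2 (comp_U _ _ _ h ⟨hab, hc, h1⟩)

theorem shortcut {D : Dag V} {X Y : V} (p : GPath D.Adj X Y) (hp : p.CpPossiblyDirected)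
    (i : ℕ) (hi : i + 2 ≤ p.n) (hadj : D.Adj (p.f ⟨i, by omega⟩) (p.f ⟨i + 2, by omega⟩))
    (hdir : ¬ D.CpDir (p.f ⟨i + 2, by omega⟩) (p.f ⟨i, by omega⟩)) :
    ∃ q : GPath D.Adj X Y, q.CpPossiblyDirected ∧ q.n < p.n := by
  obtain ⟨n, f, inj, first, last, adj⟩ := p
  replace hi : i + 2 ≤ n := hi
  obtain ⟨m, rfl⟩ : ∃ m, n = m + 1 := ⟨n - 1, by omega⟩
  let g : Fin (m + 1) → Fin (m + 1 + 1) := fun j =>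
    if (j : ℕ) ≤ i then ⟨j, by omega⟩ else ⟨j + 1, by omega⟩
  have gval : ∀ j, ((g j : Fin (m + 1 + 1)) : ℕ) = if (j : ℕ) ≤ i then (j : ℕ) else j + 1 := by
    intro j; simp only [g]; split_ifs <;> rfl
  have step : ∀ j : Fin m, (∃ k : Fin (m + 1), g j.castSucc = k.castSucc ∧ g j.succ = k.succ) ∨
      (g j.castSucc = ⟨i, by omega⟩ ∧ g j.succ = ⟨i + 2, by omega⟩) := by
    intro j
    rcases Nat.lt_trichotomy (j : ℕ) i with h | h | h
    · left
      refine ⟨⟨j, by omega⟩, ?_, ?_⟩ <;> apply Fin.ext <;> rw [gval] <;>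
        simp only [Fin.val_castSucc, Fin.val_succ] <;> split_ifs <;> omega
    · right
      constructor <;> apply Fin.ext <;> rw [gval] <;>
        simp only [Fin.val_castSucc, Fin.val_succ] <;> split_ifs <;> omega
    · left
      refine ⟨⟨j + 1, by omega⟩, ?_, ?_⟩ <;> apply Fin.ext <;> rw [gval] <;>
        simp only [Fin.val_castSucc, Fin.val_succ] <;> split_ifs <;> omega
  refine ⟨⟨m, fun j => f (g j), ?_, ?_, ?_, ?_⟩, ?_, Nat.lt_succ_self m⟩
  · intro j k hjk
    have h := congrArg Fin.val (inj hjk)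
    rw [gval, gval] at h
    apply Fin.ext
    split_ifs at h <;> omega
  · rw [← first]; congr 1
  · rw [← last]; congr 1; apply Fin.ext; rw [gval, if_neg (by simp; omega)]
  · intro j
    rcases step j with ⟨k, h1, h2⟩ | ⟨h1, h2⟩
    · simp only [h1, h2]; exact adj k
    · simp only [h1, h2]; exact hadj
  · intro j
    rcases step j with ⟨k, h1, h2⟩ | ⟨h1, h2⟩
    · simp only [h1, h2]; exact hp k
    · simp only [h1, h2]; exact hdir

end CpAux

/-- If `p` is a possibly directed path from `X` to `Y` in the CPDAG `G` of
the MEC of a DAG whose number of edges is minimal among all possibly directed paths from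
`X` to `Y` in `G`, then `p` is unshielded. -/
theorem shortest_possiblyDirected_path_unshielded
    {V : Type*} [Fintype V] (D : Dag V) (X Y : V) (hXY : X ≠ Y)
    (p : GPath D.Adj X Y) (hp : p.CpPossiblyDirected)
    (hmin : ∀ q : GPath D.Adj X Y, q.CpPossiblyDirected → p.n ≤ q.n) :
    p.Unshielded := by
  intro i hi hadj
  by_cases hdir : D.CpDir (p.f ⟨i + 2, by omega⟩) (p.f ⟨i, by omega⟩)
  · exact CpAux.triangle D (p.adj ⟨i, by omega⟩) (p.adj ⟨i + 1, by omega⟩)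
      (hp ⟨i, by omega⟩) (hp ⟨i + 1, by omega⟩) hdir
  · obtain ⟨q, h1, h2⟩ := CpAux.shortcut p hp i hi hadj hdir
    have := hmin q h1
    omega
end
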